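/- arXiv:1607.05930 — 7 statements merged into one kernel-verified Lean document; each statement's English description precedes it below -/
import Mathlib

section
/- If T is a nontrivial tree, then pc_{1,2}(T) = σ'₂(T) − 1, where σ'₂(T) is the maximum of deg(x) + deg(y) over all pairs of adjacent vertices x, y of T. -/
open SimpleGraph

/-- A walk is *distance `ℓ`-proper* with respect to an edge-coloring `c` if any two
edges whose positions along the walk differ by at most `ℓ` receive distinct colors
(equivalently, no two edges of the same color appear with fewer than `ℓ` edges in
between on the walk). -/
def SimpleGraph.Walk.IsDistProper {V : Type*} {G : SimpleGraph V} {u v : V}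
    (ℓ : ℕ) (c : Sym2 V → ℕ) (p : G.Walk u v) : Prop :=
  ∀ (i j : ℕ) (hi : i < p.edges.length) (hj : j < p.edges.length),
    i < j → j ≤ i + ℓ → c (p.edges[i]'hi) ≠ c (p.edges[j]'hj)

/-- `c` is a `(1,ℓ)`-proper-path coloring of `G` using at most `k` colors
(the colors of edges of `G` lie in `{0, …, k-1}`): every pair of distinct vertices
is joined by a distance `ℓ`-proper path. -/
def SimpleGraph.IsPCColoring {V : Type*} (G : SimpleGraph V) (ℓ k : ℕ)
    (c : Sym2 V → ℕ) : Prop :=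
  (∀ e ∈ G.edgeSet, c e < k) ∧
  ∀ u v : V, u ≠ v → ∃ p : G.Walk u v, p.IsPath ∧ p.IsDistProper ℓ c

/-- The `(1,ℓ)`-proper connection number `pc_{1,ℓ}(G)`: the minimum number of colors
in an edge-coloring of `G` such that every pair of distinct vertices is connected by
a distance `ℓ`-proper path. -/
noncomputable def SimpleGraph.pc {V : Type*} (G : SimpleGraph V) (ℓ : ℕ) : ℕ :=
  sInf {k | ∃ c : Sym2 V → ℕ, G.IsPCColoring ℓ k c}

/-- `σ'₂(G)`: the largest sum of degrees of two adjacent vertices of `G`. -/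
noncomputable def SimpleGraph.sigmaTwo {V : Type*} [Fintype V] (G : SimpleGraph V)
    [DecidableRel G.Adj] : ℕ :=
  sSup {d | ∃ x y : V, G.Adj x y ∧ d = G.degree x + G.degree y}

/-! In a tree the path joining two vertices is unique, so a coloring in which all pairs are joined
by distance 2-proper paths is the same as a strong edge-coloring: edges that share a vertex or are
joined by an edge get distinct colors. For adjacent `x` and `y`, the `deg x + deg y - 1` edges that
meet `{x, y}` therefore have distinct colors. Conversely, root the tree and color the edges greedily
in order of the depth of their upper endpoint. When the edge from `p` to one of its children is
colored, every conflicting edge that already has a color meets `p` or the parent `g` of `p`, so at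
most `deg p + deg g - 2` colors are forbidden. -/

section

variable {V : Type*} {G : SimpleGraph V}

/-- The square of the line graph of `G`: two distinct edges are adjacent when they share a vertex
or are joined by an edge. Its vertex type is all of `Sym2 V`, the domain of the edge-colorings
above, so the non-edges of `G` are isolated vertices. -/
def strongLineGraph (G : SimpleGraph V) : SimpleGraph (Sym2 V) where
  Adj e f := e ≠ f ∧ e ∈ G.edgeSet ∧ f ∈ G.edgeSet ∧ ∃ a ∈ e, ∃ b ∈ f, a = b ∨ G.Adj a b
  symm := ⟨fun _ _ ⟨hne, he, hf, a, ha, b, hb, hab⟩ =>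
    ⟨hne.symm, hf, he, b, hb, a, ha, hab.imp Eq.symm Adj.symm⟩⟩
  loopless := ⟨fun _ h => h.1 rfl⟩

/-- A strong edge-coloring: edges that share a vertex or are joined by an edge receive distinct
colors. -/
def IsStrongEdgeColoring {α : Type*} (G : SimpleGraph V) (c : Sym2 V → α) : Prop :=
  ∀ ⦃e f⦄, (strongLineGraph G).Adj e f → c e ≠ c f

theorem IsStrongEdgeColoring.isDistProper_of_isTrail {c : Sym2 V → ℕ}
    (hc : IsStrongEdgeColoring G c) {u v : V} {p : G.Walk u v} (hp : p.IsTrail) :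
    p.IsDistProper 2 c := by
  intro i j hi hj hij hj2
  have hadj : p.getVert (i + 1) = p.getVert j ∨ G.Adj (p.getVert (i + 1)) (p.getVert j) := by
    rw [p.length_edges] at hj
    obtain rfl | rfl : j = i + 1 ∨ j = i + 1 + 1 := by omega
    · exact .inl rfl
    · exact .inr (p.adj_getVert_succ (by omega))
  refine hc ⟨?_, p.edges_subset_edgeSet (List.getElem_mem hi),
    p.edges_subset_edgeSet (List.getElem_mem hj), _, ?_, _, ?_, hadj⟩
  · exact fun h => hij.ne (hp.edges_nodup.getElem_inj_iff.1 h)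
  · simp [Walk.getElem_edges]
  · simp [Walk.getElem_edges]

theorem isDistProper_of_isPCColoring (hG : G.IsAcyclic) {ℓ k : ℕ} {c : Sym2 V → ℕ}
    (hc : G.IsPCColoring ℓ k c) {u v : V} {p : G.Walk u v} (hp : p.IsPath) :
    p.IsDistProper ℓ c := by
  obtain rfl | huv := eq_or_ne u v
  · obtain rfl := (Walk.isPath_iff_nil.1 hp).eq_nil
    simp [Walk.IsDistProper]
  · obtain ⟨q, hq, hqc⟩ := hc.2 u v huv
    obtain rfl : p = q := congrArg Subtype.val ((hG.subsingleton_path u v).elim ⟨p, hp⟩ ⟨q, hq⟩)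
    exact hqc

theorem ne_of_isPCColoring_two_of_mem (hG : G.IsAcyclic) {k : ℕ} {c : Sym2 V → ℕ}
    (hc : G.IsPCColoring 2 k c) {a : V} {e f : Sym2 V} (hne : e ≠ f) (he : e ∈ G.edgeSet)
    (hf : f ∈ G.edgeSet) (hae : a ∈ e) (haf : a ∈ f) : c e ≠ c f := by
  obtain ⟨u, rfl⟩ := hae
  obtain ⟨w, rfl⟩ := haf
  rw [mem_edgeSet] at he hf
  rw [Sym2.eq_swap] at hne ⊢
  let p : G.Walk u w := .cons he.symm (.cons hf .nil)
  have hp : p.IsPath := (hG.isPath_iff_isChain p).2 (by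
    simpa only [p, Walk.edges_cons, Walk.edges_nil, List.isChain_pair] using hne)
  exact isDistProper_of_isPCColoring hG hc hp 0 1 (by simp [p]) (by simp [p]) (by simp) (by simp)

theorem isStrongEdgeColoring_of_isPCColoring_two (hG : G.IsAcyclic) {k : ℕ} {c : Sym2 V → ℕ}
    (hc : G.IsPCColoring 2 k c) : IsStrongEdgeColoring G c := by
  rintro e f ⟨hne, he, hf, a, hae, b, hbf, rfl | hab⟩
  · exact ne_of_isPCColoring_two_of_mem hG hc hne he hf hae hbf
  by_cases hbe : b ∈ e
  · exact ne_of_isPCColoring_two_of_mem hG hc hne he hf hbe hbf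
  by_cases haf : a ∈ f
  · exact ne_of_isPCColoring_two_of_mem hG hc hne he hf hae haf
  obtain ⟨u, rfl⟩ := hae
  obtain ⟨w, rfl⟩ := hbf
  rw [mem_edgeSet] at he hf
  rw [Sym2.eq_swap] at hbe ⊢
  let p : G.Walk u w := .cons he.symm (.cons hab (.cons hf .nil))
  have hp : p.IsPath := (hG.isPath_iff_isChain p).2 (by
    simp only [p, Walk.edges_cons, Walk.edges_nil, List.isChain_cons_cons, List.isChain_singleton,
      and_true]
    exact ⟨fun h => hbe (h ▸ Sym2.mem_mk_right a b), fun h => haf (h ▸ Sym2.mem_mk_left a b)⟩)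
  exact isDistProper_of_isPCColoring hG hc hp 0 2 (by simp [p]) (by simp [p]) (by simp) (by simp)

theorem isPCColoring_two_iff (hG : G.IsTree) {k : ℕ} {c : Sym2 V → ℕ} :
    G.IsPCColoring 2 k c ↔ (∀ e ∈ G.edgeSet, c e < k) ∧ IsStrongEdgeColoring G c := by
  refine ⟨fun hc => ⟨hc.1, isStrongEdgeColoring_of_isPCColoring_two hG.isAcyclic hc⟩,
    fun ⟨hk, hc⟩ => ⟨hk, fun u v _ => ?_⟩⟩
  obtain ⟨p, hp⟩ := (hG.existsUnique_path u v).exists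
  exact ⟨p, hp, hc.isDistProper_of_isTrail hp.isTrail⟩

theorem finite_incidenceSet [G.LocallyFinite] (x : V) : (G.incidenceSet x).Finite := by
  classical exact Set.toFinite _

theorem ncard_incidenceSet_union_add_one [G.LocallyFinite] {x y : V} (h : G.Adj x y) :
    (G.incidenceSet x ∪ G.incidenceSet y).ncard + 1 = G.degree x + G.degree y := by
  classical
  rw [← Set.ncard_singleton s(x, y), ← G.incidenceSet_inter_incidenceSet_of_adj h,
    Set.ncard_union_add_ncard_inter _ _ (finite_incidenceSet x) (finite_incidenceSet y)]
  simp only [← coe_incidenceFinset, Set.ncard_coe_finset, card_incidenceFinset_eq_degree]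

theorem IsStrongEdgeColoring.injOn_incidenceSet_union {α : Type*} {c : Sym2 V → α}
    (hc : IsStrongEdgeColoring G c) {x y : V} (h : G.Adj x y) :
    Set.InjOn c (G.incidenceSet x ∪ G.incidenceSet y) := by
  intro e he f hf hef
  by_contra hne
  obtain ⟨a, ha, hae⟩ : ∃ a ∈ s(x, y), e ∈ G.incidenceSet a := by simpa using he
  obtain ⟨b, hb, hbf⟩ : ∃ b ∈ s(x, y), f ∈ G.incidenceSet b := by simpa using hf
  have hab : a = b ∨ G.Adj a b := by
    rw [or_iff_not_imp_left]
    intro hab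
    rwa [← mem_edgeSet, ← (Sym2.mem_and_mem_iff hab).1 ⟨ha, hb⟩]
  exact hc ⟨hne, hae.1, hbf.1, a, hae.2, b, hbf.2, hab⟩ hef

theorem IsStrongEdgeColoring.degree_add_degree_le [G.LocallyFinite] {c : Sym2 V → ℕ} {k : ℕ}
    (hc : IsStrongEdgeColoring G c) (hk : ∀ e ∈ G.edgeSet, c e < k) {x y : V} (h : G.Adj x y) :
    G.degree x + G.degree y ≤ k + 1 := by
  rw [← ncard_incidenceSet_union_add_one h, add_le_add_iff_right]
  have hmaps : ∀ e ∈ G.incidenceSet x ∪ G.incidenceSet y, c e ∈ Set.Iio k := by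
    rintro e (he | he) <;> exact hk e he.1
  simpa using Set.ncard_le_ncard_of_injOn c hmaps (hc.injOn_incidenceSet_union h)

theorem bddAbove_degree_add_degree [Fintype V] (G : SimpleGraph V) [DecidableRel G.Adj] :
    BddAbove {d | ∃ x y : V, G.Adj x y ∧ d = G.degree x + G.degree y} := by
  refine ⟨Fintype.card V + Fintype.card V, ?_⟩
  rintro d ⟨x, y, -, rfl⟩
  exact add_le_add (G.degree_lt_card_verts x).le (G.degree_lt_card_verts y).le

theorem degree_add_degree_le_sigmaTwo [Fintype V] [DecidableRel G.Adj] {x y : V}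
    (h : G.Adj x y) : G.degree x + G.degree y ≤ G.sigmaTwo :=
  le_csSup (bddAbove_degree_add_degree G) ⟨x, y, h, rfl⟩

theorem exists_adj_sigmaTwo_eq [Fintype V] [DecidableRel G.Adj] {u v : V} (h : G.Adj u v) :
    ∃ x y, G.Adj x y ∧ G.sigmaTwo = G.degree x + G.degree y :=
  Nat.sSup_mem (s := {d | ∃ x y : V, G.Adj x y ∧ d = G.degree x + G.degree y})
    ⟨_, u, v, h, rfl⟩ (bddAbove_degree_add_degree G)

theorem exists_coloring_le_ncard_adj_le {W ι : Type*} [Finite W] [LinearOrder ι]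
    (H : SimpleGraph W) (rank : W → ι) :
    ∃ C : H.Coloring ℕ, ∀ v, C v ≤ {w | H.Adj v w ∧ rank w ≤ rank v}.ncard := by
  classical
  have := Fintype.ofFinite W
  suffices ∀ s : Finset W, ∃ c : W → ℕ,
      (∀ v ∈ s, c v ≤ {w | H.Adj v w ∧ rank w ≤ rank v}.ncard) ∧
      ∀ v ∈ s, ∀ w ∈ s, H.Adj v w → c v ≠ c w by
    obtain ⟨c, hle, hne⟩ := this .univ
    exact ⟨.mk c fun h => hne _ (by simp) _ (by simp) h, fun v => hle v (by simp)⟩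
  intro s
  induction s using Finset.induction_on_max_value rank with
  | empty => exact ⟨0, by simp, by simp⟩
  | insert a s ha hmax ih =>
    obtain ⟨c, hle, hne⟩ := ih
    set B := {w | H.Adj a w ∧ rank w ≤ rank a}
    obtain ⟨k, hk, hkB⟩ : ∃ k ∈ Set.Iic B.ncard, k ∉ c '' B := by
      refine Set.exists_mem_notMem_of_ncard_lt_ncard ?_
      simpa [Nat.lt_succ_iff] using Set.ncard_image_le B.toFinite
    have hnew : ∀ w ∈ s, H.Adj a w → k ≠ c w := fun w hw haw hkw =>
      hkB ⟨w, ⟨haw, hmax w hw⟩, hkw.symm⟩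
    have hc : ∀ w ∈ s, Function.update c a k w = c w := fun w hw =>
      Function.update_of_ne (ne_of_mem_of_not_mem hw ha) ..
    refine ⟨Function.update c a k, ?_, ?_⟩
    · rw [Finset.forall_mem_insert, Function.update_self]
      exact ⟨hk, fun v hv => (hc v hv).le.trans (hle v hv)⟩
    · simp only [Finset.forall_mem_insert, Function.update_self]
      refine ⟨⟨fun h => (H.irrefl h).elim, fun w hw h => ?_⟩,
        fun v hv => ⟨fun h => ?_, fun w hw h => ?_⟩⟩
      · rw [hc w hw]
        exact hnew w hw h
      · rw [hc v hv]
        exact (hnew v hv h.symm).symm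
      · rw [hc v hv, hc w hw]
        exact hne v hv w hw h

/-- A depth function exhibiting `G` as a rooted forest: along every edge the depth changes, and
every vertex has at most one neighbor of smaller depth, its parent. Depths may
skip values, as only their order matters. -/
structure IsForestDepth {ι : Type*} [LinearOrder ι] (G : SimpleGraph V) (d : V → ι) : Prop where
  ne_of_adj : ∀ ⦃v w⦄, G.Adj v w → d v ≠ d w
  eq_of_adj_of_lt : ∀ ⦃v w w'⦄, G.Adj v w → G.Adj v w' → d w < d v → d w' < d v → w = w'

theorem eq_of_adj_of_dist_lt (hG : G.IsAcyclic) {u v w w' : V} (hw : G.Adj v w)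
    (hw' : G.Adj v w') (hd : G.dist u w < G.dist u v) (hd' : G.dist u w' < G.dist u v) :
    w = w' := by
  have huv : G.Reachable u v := .of_dist_ne_zero (by omega)
  obtain ⟨p, hp, hpd⟩ := huv.exists_path_of_dist
  have eq_penultimate {x : V} (hx : G.Adj v x) (hxd : G.dist u x < G.dist u v) :
      x = p.penultimate := by
    obtain ⟨q, hq, hqd⟩ := (huv.trans hx.reachable).exists_path_of_dist
    have hvq : v ∉ q.support := fun hv => by
      have := congrArg Walk.length (hG.path_concat hp hq hx hv)
      rw [Walk.length_concat] at this
      omega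
    exact hG.eq_penultimate_of_adj_end hp hx
      (hG.mem_support_of_ne_mem_support_of_adj_of_isPath hp hq hx hvq)
  rw [eq_penultimate hw hd, eq_penultimate hw' hd']

theorem exists_isForestDepth (hG : G.IsAcyclic) : ∃ d : V → ℕ, IsForestDepth G d := by
  let root (v : V) : V := (G.connectedComponentMk v).nonempty_supp.some
  have root_reachable (v : V) : G.Reachable (root v) v :=
    ConnectedComponent.exact (G.connectedComponentMk v).nonempty_supp.some_mem
  have root_eq {v w : V} (h : G.Adj v w) : root w = root v := by
    simp only [root, ConnectedComponent.sound h.reachable]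
  refine ⟨fun v => G.dist (root v) v, fun v w h => ?_, fun v w w' h h' hd hd' => ?_⟩
  · rw [root_eq h]
    exact hG.dist_ne_of_adj h (root_reachable v)
  · rw [root_eq h] at hd
    rw [root_eq h'] at hd'
    exact eq_of_adj_of_dist_lt hG h h' hd hd'

namespace IsForestDepth

variable {ι : Type*} [LinearOrder ι] {d : V → ι}

theorem exists_adj_lt_of_mem_edgeSet (hd : IsForestDepth G d) {e : Sym2 V} (he : e ∈ G.edgeSet) :
    ∃ p v, G.Adj p v ∧ d p < d v ∧ e = s(p, v) := by
  induction e with | _ a b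
  obtain h | h := (hd.ne_of_adj he).lt_or_gt
  · exact ⟨a, b, he, h, rfl⟩
  · exact ⟨b, a, he.symm, h, Sym2.eq_swap⟩

theorem exists_adj_forall_lt_imp_eq (hd : IsForestDepth G d) {p v : V} (h : G.Adj p v) :
    ∃ g, G.Adj p g ∧ ∀ b, G.Adj p b → d b < d p → b = g := by
  by_cases hp : ∃ g, G.Adj p g ∧ d g < d p
  · obtain ⟨g, hpg, hg⟩ := hp
    exact ⟨g, hpg, fun b hpb hb => hd.eq_of_adj_of_lt hpb hpg hb hg⟩
  · exact ⟨v, h, fun b hpb hb => (hp ⟨b, hpb, hb⟩).elim⟩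

theorem mem_of_inf_map_le (hd : IsForestDepth G d) {f : Sym2 V} (hf : f ∈ G.edgeSet) {z b : V}
    (hfz : (f.map d).inf ≤ d z) (hbf : b ∈ f) (hzb : G.Adj z b) (hlt : d z < d b) : z ∈ f := by
  obtain ⟨b', rfl⟩ := hbf
  have hb' : d b' ≤ d z := (inf_le_iff.1 hfz).resolve_left hlt.not_ge
  rw [hd.eq_of_adj_of_lt hzb.symm hf hlt (hb'.trans_lt hlt)]
  exact Sym2.mem_mk_right b b'

theorem exists_adj_forall_mem_incidenceSet_union (hd : IsForestDepth G d) {e : Sym2 V}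
    (he : e ∈ G.edgeSet) :
    ∃ p g, G.Adj p g ∧ e ∈ G.incidenceSet p ∪ G.incidenceSet g ∧
      ∀ f, (strongLineGraph G).Adj e f → (f.map d).inf ≤ (e.map d).inf →
        f ∈ G.incidenceSet p ∪ G.incidenceSet g := by
  obtain ⟨p, v, hpv, hlt, rfl⟩ := hd.exists_adj_lt_of_mem_edgeSet he
  -- `g` is the parent of `p`, or any neighbor of `p` when `p` is a root.
  obtain ⟨g, hpg, hg⟩ := hd.exists_adj_forall_lt_imp_eq hpv
  refine ⟨p, g, hpg, .inl ⟨he, Sym2.mem_mk_left p v⟩, ?_⟩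
  rintro f ⟨-, -, hf, a, ha, b, hb, hab⟩ hrank
  have hfp : (f.map d).inf ≤ d p := hrank.trans inf_le_left
  have hv (hvf : v ∈ f) : p ∈ f := hd.mem_of_inf_map_le hf hfp hvf hpv hlt
  suffices p ∈ f ∨ g ∈ f from this.imp (⟨hf, ·⟩) (⟨hf, ·⟩)
  obtain rfl | rfl := Sym2.mem_iff.1 ha <;> obtain rfl | hab := hab
  · exact .inl hb
  · obtain h | h := (hd.ne_of_adj hab).lt_or_gt
    · exact .inl (hd.mem_of_inf_map_le hf hfp hb hab h)
    · exact .inr (hg b hab h ▸ hb)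
  · exact .inl (hv hb)
  · obtain h | h := (hd.ne_of_adj hab).lt_or_gt
    · exact .inl (hv (hd.mem_of_inf_map_le hf (hfp.trans hlt.le) hb hab h))
    · exact .inl (hd.eq_of_adj_of_lt hab hpv.symm h hlt ▸ hb)

end IsForestDepth

theorem exists_isStrongEdgeColoring [Fintype V] [DecidableRel G.Adj] (hG : G.IsAcyclic) :
    ∃ c : Sym2 V → ℕ, IsStrongEdgeColoring G c ∧ ∀ e ∈ G.edgeSet, c e < G.sigmaTwo - 1 := by
  obtain ⟨d, hd⟩ := exists_isForestDepth hG
  obtain ⟨C, hC⟩ := exists_coloring_le_ncard_adj_le (strongLineGraph G) fun e => (e.map d).inf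
  refine ⟨C, fun e f h => C.valid h, fun e he => ?_⟩
  obtain ⟨p, g, hpg, hmem, hN⟩ := hd.exists_adj_forall_mem_incidenceSet_union he
  set N := G.incidenceSet p ∪ G.incidenceSet g
  have hlower : {f | (strongLineGraph G).Adj e f ∧ (f.map d).inf ≤ (e.map d).inf} ⊆ N \ {e} :=
    fun f ⟨hef, hrank⟩ => ⟨hN f hef hrank, hef.ne'⟩
  have hCe : C e < N.ncard := calc
    C e ≤ (N \ {e}).ncard := (hC e).trans (Set.ncard_le_ncard hlower)
    _ < N.ncard := Set.ncard_sdiff_singleton_lt_of_mem hmem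
  have hNcard : N.ncard + 1 = G.degree p + G.degree g := ncard_incidenceSet_union_add_one hpg
  have hσ := degree_add_degree_le_sigmaTwo hpg
  omega

end

/-- If `T` is a nontrivial tree, then `pc_{1,2}(T) = σ'₂(T) - 1`. -/
theorem pc_tree {V : Type*} [Fintype V] (T : SimpleGraph V) [DecidableRel T.Adj]
    (hT : T.IsTree) (hV : Nontrivial V) :
    T.pc 2 = T.sigmaTwo - 1 := by
  obtain ⟨c, hc, hck⟩ := exists_isStrongEdgeColoring hT.isAcyclic
  have hupper : T.IsPCColoring 2 (T.sigmaTwo - 1) c := (isPCColoring_two_iff hT).2 ⟨hck, hc⟩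
  refine le_antisymm (Nat.sInf_le ⟨c, hupper⟩) (le_csInf ⟨_, c, hupper⟩ ?_)
  rintro k ⟨c', hc'⟩
  obtain ⟨hk, hstrong⟩ := (isPCColoring_two_iff hT).1 hc'
  obtain ⟨r⟩ := hT.connected.nonempty
  obtain ⟨s, hrs⟩ := hT.connected.preconnected.exists_adj_of_nontrivial r
  obtain ⟨x, y, hxy, hσ⟩ := exists_adj_sigmaTwo_eq hrs
  rw [hσ, Nat.sub_le_iff_le_add]
  exact hstrong.degree_add_degree_le hk hxy
end

section
/- Let ℓ ≥ 2 be an integer and let 1 ≤ m ≤ n. Then the complete bipartite graph K_{m,n} satisfies: pc_{1,ℓ}(K_{m,n}) = n if m = 1; pc_{1,ℓ}(K_{m,n}) = 2 if m ≥ 2 and m ≤ n ≤ 2^m; pc_{1,ℓ}(K_{m,n}) = 3 if either ℓ = 2, m ≥ 2 and n > 2^m, or ℓ ≥ 3, m ≥ 2 and 2^m < n ≤ 3^m; and pc_{1,ℓ}(K_{m,n}) = 4 if ℓ ≥ 3, m ≥ 2 and n > 3^m. -/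
open SimpleGraph

/-!
Record a coloring of `K_{α,β}` by the *code* `α → Fin k` of each `b : β`, its color at `b` of every
edge. Two vertices of `β` are joined by a proper path of length `2` exactly when their codes differ,
and every other path between them has length at least `4`. If `k ≤ ℓ`, a distance `ℓ`-proper path
repeats no color and so has at most `k` edges; for `k ≤ 3` the codes are therefore pairwise distinct
and `|β| ≤ k ^ |α|`. If `α` is a single vertex, no longer path exists at all, and `|β| ≤ k`.

Conversely, distinct codes are enough for `β`, and the vertices of `α` are separated as soon as all
codes that are constant but for one coordinate occur. When `β` is too large for this, use every
code, give all surplus vertices one common code and join them by detours `b - a - h - a' - b'`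
through a fixed vertex `h`. The colors `0, 1, 2, 3` along the detour suit every `ℓ`, and
`0, 1, 2, 0` suffice for `ℓ = 2`.
-/

section ColorSequence

variable {κ : Type*} {ℓ : ℕ}

/-- The sequence form of distance `ℓ`-properness, for the list of colors read along a walk: no
entry recurs among the `ℓ` entries following it. The recursion lets `simp` decide it on short
lists. -/
def IsDistProperSeq (ℓ : ℕ) : List κ → Prop
  | [] => True
  | x :: l => x ∉ l.take ℓ ∧ IsDistProperSeq ℓ l

lemma isDistProperSeq_iff_getElem (l : List κ) :
    IsDistProperSeq ℓ l ↔ ∀ (i j : ℕ) (hi : i < l.length) (hj : j < l.length),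
      i < j → j ≤ i + ℓ → l[i] ≠ l[j] := by
  induction l with
  | nil => simp [IsDistProperSeq]
  | cons x l ih =>
    rw [IsDistProperSeq, ih]
    constructor
    · rintro ⟨hx, hl⟩ (_ | i) (_ | j) hi hj hij hjℓ
      · omega
      · simp only [List.length_cons] at hj
        exact fun hxj => hx (List.mem_take_iff_getElem.2 ⟨j, by omega, hxj.symm⟩)
      · omega
      · exact hl i j _ _ (by omega) (by omega)
    · refine fun h => ⟨fun hx => ?_, fun i j hi hj hij hjℓ => ?_⟩
      · obtain ⟨j, hj, hjx⟩ := List.mem_take_iff_getElem.1 hx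
        exact h 0 (j + 1) (by simp) (by simp; omega) (by omega) (by omega) (by simp [hjx])
      · exact h (i + 1) (j + 1) (by simpa) (by simpa) (by omega) (by omega)

lemma isDistProperSeq_of_nodup {l : List κ} (hl : l.Nodup) : IsDistProperSeq ℓ l := by
  induction l with
  | nil => trivial
  | cons x l ih =>
    rw [List.nodup_cons] at hl
    exact ⟨fun hx => hl.1 (List.mem_of_mem_take hx), ih hl.2⟩

lemma IsDistProperSeq.nodup_take {l : List κ} (hl : IsDistProperSeq ℓ l) :
    (l.take (ℓ + 1)).Nodup := by
  induction l with
  | nil => simp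
  | cons x l ih =>
    rw [List.take_succ_cons, List.nodup_cons]
    exact ⟨hl.1, (ih hl.2).sublist (List.take_sublist_take_left ℓ.le_succ)⟩

lemma IsDistProperSeq.length_le {k : ℕ} {l : List ℕ} (hl : IsDistProperSeq ℓ l)
    (hlt : ∀ x ∈ l, x < k) (hkℓ : k ≤ ℓ) : l.length ≤ k := by
  have hwindow : (l.take (ℓ + 1)).length ≤ k := by
    have hsub : (l.take (ℓ + 1)).toFinset ⊆ Finset.range k := fun x hx =>
      Finset.mem_range.2 (hlt x (List.mem_of_mem_take (List.mem_toFinset.1 hx)))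
    simpa [List.toFinset_card_of_nodup hl.nodup_take] using Finset.card_le_card hsub
  rw [List.length_take] at hwindow
  omega

end ColorSequence

section Walks

variable {V : Type*} {G : SimpleGraph V} {u v : V} {c : Sym2 V → ℕ} {k ℓ : ℕ}

lemma isDistProper_iff (p : G.Walk u v) :
    p.IsDistProper ℓ c ↔ IsDistProperSeq ℓ (p.edges.map c) := by
  simp [isDistProperSeq_iff_getElem, Walk.IsDistProper]

lemma length_le_of_isDistProper {p : G.Walk u v} (hp : p.IsDistProper ℓ c)
    (hc : ∀ e ∈ G.edgeSet, c e < k) (hkℓ : k ≤ ℓ) : p.length ≤ k := by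
  have hlt : ∀ x ∈ p.edges.map c, x < k :=
    List.forall_mem_map.2 fun e he => hc e (p.edges_subset_edgeSet he)
  simpa using ((isDistProper_iff p).1 hp).length_le hlt hkℓ

end Walks

section LowerBound

variable {α β : Type*} {k ℓ : ℕ} {c : Sym2 (α ⊕ β) → ℕ}

lemma edges_eq_or_four_le_length {b b' : β} (hb : b ≠ b')
    (p : (completeBipartiteGraph α β).Walk (.inr b) (.inr b')) :
    (∃ a, p.edges = [s(.inl a, .inr b), s(.inl a, .inr b')]) ∨
      4 ≤ p.length ∧ ∃ a a', [.inl a, .inl a'].Sublist p.support := by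
  match p with
  | .nil => exact absurd rfl hb
  | .cons (v := .inr _) h _ => simp at h
  | .cons (v := .inl _) _ (.cons (v := .inl _) h _) => simp at h
  | .cons (v := .inl a) _ (.cons (v := .inr _) _ .nil) => exact .inl ⟨a, by simp [Sym2.eq_swap]⟩
  | .cons (v := .inl _) _ (.cons (v := .inr _) _ (.cons (v := .inr _) h _)) => simp at h
  | .cons (v := .inl a) _ (.cons (v := .inr _) _ (.cons (v := .inl a') _ (.cons _ q))) =>
    exact .inr ⟨by simp, a, a', by simp⟩

lemma length_lt_four_of_isPath [Subsingleton α] {b b' : β} (hb : b ≠ b')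
    {p : (completeBipartiteGraph α β).Walk (.inr b) (.inr b')} (hp : p.IsPath) :
    p.length < 4 := by
  obtain ⟨a, ha⟩ | ⟨-, a, a', haa'⟩ := edges_eq_or_four_le_length hb p
  · simp [← p.length_edges, ha]
  · have hne : a ≠ a' := by simpa using hp.support_nodup.sublist haa'
    exact absurd (Subsingleton.elim a a') hne

lemma exists_color_ne_of_length_lt_four (hℓ : 1 ≤ ℓ) {b b' : β} (hb : b ≠ b')
    {p : (completeBipartiteGraph α β).Walk (.inr b) (.inr b')} (hp : p.IsDistProper ℓ c)
    (hlen : p.length < 4) : ∃ a, c s(.inl a, .inr b) ≠ c s(.inl a, .inr b') := by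
  obtain ⟨a, ha⟩ | ⟨hlen', -⟩ := edges_eq_or_four_le_length hb p
  · obtain ⟨ℓ, rfl⟩ := Nat.exists_eq_add_of_le' hℓ
    exact ⟨a, by simpa [isDistProper_iff, ha, IsDistProperSeq] using hp⟩
  · omega

lemma card_le_pow_of_length_lt_four [Fintype α] [Fintype β] (hℓ : 1 ≤ ℓ)
    (hc : (completeBipartiteGraph α β).IsPCColoring ℓ k c)
    (hlen : ∀ (b b' : β) (p : (completeBipartiteGraph α β).Walk (.inr b) (.inr b')),
      b ≠ b' → p.IsPath → p.IsDistProper ℓ c → p.length < 4) :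
    Fintype.card β ≤ k ^ Fintype.card α := by
  classical
  let code (b : β) (a : α) : Fin k := ⟨c s(.inl a, .inr b), hc.1 _ (by simp)⟩
  have hcode : Function.Injective code := by
    intro b b' hbb'
    by_contra hb
    obtain ⟨p, hpath, hp⟩ := hc.2 (.inr b) (.inr b') (by simpa using hb)
    obtain ⟨a, ha⟩ := exists_color_ne_of_length_lt_four hℓ hb hp (hlen b b' p hb hpath hp)
    exact ha (congrArg Fin.val (congrFun hbb' a))
  simpa using Fintype.card_le_of_injective code hcode

lemma card_le_pow_of_isPCColoring [Fintype α] [Fintype β] (hℓ : 1 ≤ ℓ) (hk : k ≤ 3) (hkℓ : k ≤ ℓ)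
    (hc : (completeBipartiteGraph α β).IsPCColoring ℓ k c) :
    Fintype.card β ≤ k ^ Fintype.card α :=
  card_le_pow_of_length_lt_four hℓ hc fun _ _ _ _ _ hp =>
    (length_le_of_isDistProper hp hc.1 hkℓ).trans_lt (by omega)

lemma card_le_of_isPCColoring [Unique α] [Fintype β] (hℓ : 1 ≤ ℓ)
    (hc : (completeBipartiteGraph α β).IsPCColoring ℓ k c) : Fintype.card β ≤ k := by
  simpa using card_le_pow_of_length_lt_four hℓ hc fun _ _ _ hb hp _ =>
    length_lt_four_of_isPath hb hp

end LowerBound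

section Codes

variable {β γ : Type*} [Fintype β] [Fintype γ]

lemma exists_injective_subset_range {s : Finset γ} (hs : s.card ≤ Fintype.card β)
    (hβγ : Fintype.card β ≤ Fintype.card γ) :
    ∃ f : β → γ, Function.Injective f ∧ ↑s ⊆ Set.range f := by
  obtain ⟨t, hst, -, ht⟩ := Finset.exists_subsuperset_card_eq s.subset_univ hs hβγ
  let e : β ≃ t := Fintype.equivOfCardEq (by simpa using ht.symm)
  exact ⟨fun b => e b, Subtype.val_injective.comp e.injective,
    fun x hx => ⟨e.symm ⟨x, hst hx⟩, by simp⟩⟩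

lemma exists_surjective_eq_of_apply_eq (hγβ : Fintype.card γ ≤ Fintype.card β) (x : γ) :
    ∃ f : β → γ, Function.Surjective f ∧ ∀ b b', b ≠ b' → f b = f b' → f b = x := by
  obtain ⟨ι⟩ := Function.Embedding.nonempty_of_card_le hγβ
  refine ⟨Function.extend ι id fun _ => x, fun y => ⟨ι y, ι.injective.extend_apply ..⟩, ?_⟩
  intro b b' hb hbb'
  by_cases hbι : ∃ y, ι y = b
  · by_cases hbι' : ∃ y, ι y = b'
    · obtain ⟨⟨y, rfl⟩, y', rfl⟩ := And.intro hbι hbι'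
      simp only [ι.injective.extend_apply, id] at hbb'
      exact absurd (congrArg ι hbb') hb
    · rw [hbb', Function.extend_apply' _ _ _ hbι']
  · exact Function.extend_apply' _ _ _ hbι

end Codes

section UpperBound

variable {α β : Type*} {k ℓ : ℕ}

/-- The edge coloring of `K_{α,β}` in which `f b : α → Fin k` is the code of `b : β`, that is, in
which the edge between `a` and `b` has color `f b a`; pairs within one part, which are no edges, get
the junk value `0`. -/
def edgeColoring (f : β → α → Fin k) : Sym2 (α ⊕ β) → ℕ :=
  Sym2.lift ⟨fun
    | .inl a, .inr b => f b a
    | .inr b, .inl a => f b a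
    | _, _ => 0, by rintro (_ | _) (_ | _) <;> rfl⟩

@[simp]
lemma edgeColoring_inl_inr (f : β → α → Fin k) (a : α) (b : β) :
    edgeColoring f s(.inl a, .inr b) = f b a := rfl

@[simp]
lemma edgeColoring_inr_inl (f : β → α → Fin k) (a : α) (b : β) :
    edgeColoring f s(.inr b, .inl a) = f b a := rfl

lemma edgeColoring_lt (f : β → α → Fin k) :
    ∀ e ∈ (completeBipartiteGraph α β).edgeSet, edgeColoring f e < k := by
  refine Sym2.ind ?_
  rintro (a | b) (a' | b') <;> simp

lemma adj_inl_inr (a : α) (b : β) : (completeBipartiteGraph α β).Adj (.inl a) (.inr b) := by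
  simp

lemma exists_path_inr_of_ne {f : β → α → Fin k} {b b' : β} (hb : f b ≠ f b') :
    ∃ p : (completeBipartiteGraph α β).Walk (.inr b) (.inr b'),
      p.IsPath ∧ p.IsDistProper ℓ (edgeColoring f) := by
  obtain ⟨a, ha⟩ := Function.ne_iff.1 hb
  refine ⟨.cons (adj_inl_inr a b).symm (.cons (adj_inl_inr a b') .nil), ?_, ?_⟩
  · simpa using ne_of_apply_ne f hb
  · exact (isDistProper_iff _).2 (isDistProperSeq_of_nodup (by simpa [Fin.val_inj] using ha))

lemma exists_path_inl_of_ne {f : β → α → Fin k} {a a' : α} {b : β} (hb : f b a ≠ f b a') :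
    ∃ p : (completeBipartiteGraph α β).Walk (.inl a) (.inl a'),
      p.IsPath ∧ p.IsDistProper ℓ (edgeColoring f) := by
  refine ⟨.cons (adj_inl_inr a b) (.cons (adj_inl_inr a' b).symm .nil), ?_, ?_⟩
  · simpa using ne_of_apply_ne (f b) hb
  · exact (isDistProper_iff _).2 (isDistProperSeq_of_nodup (by simpa [Fin.val_inj] using hb))

lemma exists_path_inr_of_detour {f : β → α → Fin k} {a a' : α} {b h b' : β} (ha : a ≠ a')
    (hbh : b ≠ h) (hhb' : h ≠ b') (hbb' : b ≠ b')
    (hf : IsDistProperSeq ℓ [(f b a : ℕ), f h a, f h a', f b' a']) :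
    ∃ p : (completeBipartiteGraph α β).Walk (.inr b) (.inr b'),
      p.IsPath ∧ p.IsDistProper ℓ (edgeColoring f) := by
  refine ⟨.cons (adj_inl_inr a b).symm <| .cons (adj_inl_inr a h) <|
    .cons (adj_inl_inr a' h).symm <| .cons (adj_inl_inr a' b') .nil, ?_, ?_⟩
  · simp [ha, hbh, hhb', hbb']
  · simpa [isDistProper_iff] using hf

lemma isPCColoring_edgeColoring {f : β → α → Fin k}
    (hα : ∀ a a', a ≠ a' → ∃ b, f b a ≠ f b a')
    (hβ : ∀ b b', b ≠ b' → f b = f b' →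
      ∃ p : (completeBipartiteGraph α β).Walk (.inr b) (.inr b'),
        p.IsPath ∧ p.IsDistProper ℓ (edgeColoring f)) :
    (completeBipartiteGraph α β).IsPCColoring ℓ k (edgeColoring f) := by
  refine ⟨edgeColoring_lt f, ?_⟩
  rintro (a | b) (a' | b') hne
  · obtain ⟨b, hb⟩ := hα a a' (by simpa using hne)
    exact exists_path_inl_of_ne hb
  · exact ⟨(adj_inl_inr a b').toWalk, by simp, by simp [isDistProper_iff, IsDistProperSeq]⟩
  · exact ⟨(adj_inl_inr a' b).symm.toWalk, by simp, by simp [isDistProper_iff, IsDistProperSeq]⟩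
  · by_cases hb : f b = f b'
    · exact hβ b b' (by simpa using hne) hb
    · exact exists_path_inr_of_ne hb

lemma isPCColoring_edgeColoring_of_injective {f : β → α → Fin k} (hf : Function.Injective f)
    (hα : ∀ a a', a ≠ a' → ∃ b, f b a ≠ f b a') :
    (completeBipartiteGraph α β).IsPCColoring ℓ k (edgeColoring f) :=
  isPCColoring_edgeColoring hα fun _ _ hb hbb' => absurd (hf hbb') hb

lemma exists_isPCColoring_of_card_le_pow [Fintype α] [Fintype β] (hk : 2 ≤ k)
    (hαβ : Fintype.card α ≤ Fintype.card β) (hβ : Fintype.card β ≤ k ^ Fintype.card α) :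
    ∃ c, (completeBipartiteGraph α β).IsPCColoring ℓ k c := by
  classical
  have : Nontrivial (Fin k) := Fin.nontrivial_iff_two_le.2 hk
  obtain ⟨x, y, hxy⟩ := exists_pair_ne (Fin k)
  let spike (a : α) : α → Fin k := Function.update (fun _ => x) a y
  obtain ⟨f, hf, hspike⟩ := exists_injective_subset_range (β := β)
    (s := Finset.univ.image spike) (Finset.card_image_le.trans hαβ) (by simpa using hβ)
  refine ⟨_, isPCColoring_edgeColoring_of_injective hf fun a a' ha => ?_⟩
  obtain ⟨b, hb⟩ := hspike (Finset.mem_coe.2 (Finset.mem_image_of_mem spike (Finset.mem_univ a)))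
  exact ⟨b, by simpa [hb, spike, ha.symm] using hxy.symm⟩

lemma exists_isPCColoring_of_pow_le_card [Fintype α] [Fintype β] [Nontrivial α] (hℓ : 1 ≤ ℓ)
    {w x y z : Fin k} (hwxyz : IsDistProperSeq ℓ [(w : ℕ), x, y, z])
    (hβ : k ^ Fintype.card α ≤ Fintype.card β) :
    ∃ c, (completeBipartiteGraph α β).IsPCColoring ℓ k c := by
  classical
  have hwx : w ≠ x := by
    obtain ⟨ℓ, rfl⟩ := Nat.exists_eq_add_of_le' hℓ
    rintro rfl
    simp [IsDistProperSeq] at hwxyz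
  obtain ⟨a₀, a₁, ha⟩ := exists_pair_ne α
  let common : α → Fin k := Function.update (fun _ => z) a₀ w
  let hub : α → Fin k := Function.update (fun _ => y) a₀ x
  have hne : common ≠ hub := fun h => hwx (by simpa [common, hub] using congrFun h a₀)
  obtain ⟨f, hf, hcommon⟩ := exists_surjective_eq_of_apply_eq (β := β) (by simpa using hβ) common
  obtain ⟨h, hh⟩ := hf hub
  refine ⟨_, isPCColoring_edgeColoring (f := f) (fun a a' haa' => ?_) fun b b' hb hbb' => ?_⟩
  · obtain ⟨b, hb⟩ := hf (Function.update (fun _ => w) a x)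
    exact ⟨b, by simpa [hb, haa'.symm] using hwx.symm⟩
  · have hfb : f b = common := hcommon b b' hb hbb'
    have hfb' : f b' = common := hbb' ▸ hfb
    refine exists_path_inr_of_detour ha (h := h) ?_ ?_ hb ?_
    · rintro rfl
      exact hne (hfb.symm.trans hh)
    · rintro rfl
      exact hne (hfb'.symm.trans hh)
    · simpa [hfb, hfb', hh, common, hub, ha.symm] using hwxyz

lemma exists_isPCColoring_of_detour [Fintype α] [Fintype β] [Nontrivial α] (hℓ : 1 ≤ ℓ)
    (hk : 2 ≤ k) {w x y z : Fin k} (hwxyz : IsDistProperSeq ℓ [(w : ℕ), x, y, z])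
    (hαβ : Fintype.card α ≤ Fintype.card β) :
    ∃ c, (completeBipartiteGraph α β).IsPCColoring ℓ k c :=
  (le_total (Fintype.card β) (k ^ Fintype.card α)).elim
    (exists_isPCColoring_of_card_le_pow hk hαβ) (exists_isPCColoring_of_pow_le_card hℓ hwxyz)

end UpperBound

section ConnectionNumber

variable {α β : Type*} [Fintype β] {k ℓ : ℕ}

lemma pc_completeBipartiteGraph_of_unique [Unique α] (hℓ : 1 ≤ ℓ) :
    (completeBipartiteGraph α β).pc ℓ = Fintype.card β := by
  let f (b : β) (_ : α) : Fin (Fintype.card β) := Fintype.equivFin β b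
  have hf : Function.Injective f := fun b b' h => by simpa [f] using congrFun h default
  refine IsLeast.csInf_eq ⟨⟨_, isPCColoring_edgeColoring_of_injective hf ?_⟩, ?_⟩
  · exact fun a a' ha => absurd (Subsingleton.elim a a') ha
  · rintro k ⟨c, hc⟩
    exact card_le_of_isPCColoring hℓ hc

lemma pc_completeBipartiteGraph_eq_add_one [Fintype α] (hℓ : 1 ≤ ℓ) (hk : k ≤ 3) (hkℓ : k ≤ ℓ)
    (hlt : k ^ Fintype.card α < Fintype.card β)
    (hex : ∃ c, (completeBipartiteGraph α β).IsPCColoring ℓ (k + 1) c) :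
    (completeBipartiteGraph α β).pc ℓ = k + 1 := by
  refine IsLeast.csInf_eq ⟨hex, ?_⟩
  rintro j ⟨c, hc⟩
  by_contra! hj
  have hβ := card_le_pow_of_isPCColoring hℓ (by omega) (by omega) hc
  have hpow := Nat.pow_le_pow_left (show j ≤ k by omega) (Fintype.card α)
  omega

end ConnectionNumber

theorem pc_completeBipartite_general (α β : Type*) [Fintype α] [Fintype β] (ℓ : ℕ) (hℓ : 1 ≤ ℓ)
    (hαβ : Fintype.card α ≤ Fintype.card β) :
    (Fintype.card α = 1 → (completeBipartiteGraph α β).pc ℓ = Fintype.card β) ∧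
    (2 ≤ Fintype.card α → Fintype.card β ≤ 2 ^ Fintype.card α →
      (completeBipartiteGraph α β).pc ℓ = 2) ∧
    ((ℓ = 2 ∧ 2 ≤ Fintype.card α ∧ 2 ^ Fintype.card α < Fintype.card β) ∨
        (3 ≤ ℓ ∧ 2 ^ Fintype.card α < Fintype.card β ∧ Fintype.card β ≤ 3 ^ Fintype.card α) →
      (completeBipartiteGraph α β).pc ℓ = 3) ∧
    (3 ≤ ℓ → 2 ≤ Fintype.card α → 3 ^ Fintype.card α < Fintype.card β →
      (completeBipartiteGraph α β).pc ℓ = 4) := by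
  refine ⟨fun hα => ?_, fun hα hβ => ?_, ?_, fun hℓ3 hα hβ => ?_⟩
  · obtain ⟨_⟩ := Fintype.card_eq_one_iff_nonempty_unique.1 hα
    exact pc_completeBipartiteGraph_of_unique hℓ
  · exact pc_completeBipartiteGraph_eq_add_one hℓ (by omega) hℓ (by rw [one_pow]; omega)
      (exists_isPCColoring_of_card_le_pow le_rfl hαβ hβ)
  · rintro (⟨rfl, hα, hβ⟩ | ⟨hℓ3, hβ, hβ'⟩)
    · have : Nontrivial α := Fintype.one_lt_card_iff_nontrivial.1 hα
      exact pc_completeBipartiteGraph_eq_add_one hℓ (by omega) le_rfl hβ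
        (exists_isPCColoring_of_detour (w := 0) (x := 1) (y := 2) (z := 0) hℓ (by omega)
          (by simp [IsDistProperSeq]) hαβ)
    · exact pc_completeBipartiteGraph_eq_add_one hℓ (by omega) (by omega) hβ
        (exists_isPCColoring_of_card_le_pow (by omega) hαβ hβ')
  · have : Nontrivial α := Fintype.one_lt_card_iff_nontrivial.1 hα
    exact pc_completeBipartiteGraph_eq_add_one hℓ le_rfl hℓ3 hβ
      (exists_isPCColoring_of_detour (w := 0) (x := 1) (y := 2) (z := 3) hℓ (by omega)
        (isDistProperSeq_of_nodup (by decide)) hαβ)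

/-- The `(1,ℓ)`-proper connection number of the complete bipartite graph `K_{m,n}`
for `ℓ ≥ 2` and `1 ≤ m ≤ n`. -/
theorem pc_completeBipartite (ℓ m n : ℕ) (hℓ : 2 ≤ ℓ) (hm : 1 ≤ m) (hmn : m ≤ n) :
    (m = 1 → (completeBipartiteGraph (Fin m) (Fin n)).pc ℓ = n) ∧
    (2 ≤ m → n ≤ 2 ^ m → (completeBipartiteGraph (Fin m) (Fin n)).pc ℓ = 2) ∧
    ((ℓ = 2 ∧ 2 ≤ m ∧ 2 ^ m < n) ∨ (3 ≤ ℓ ∧ 2 ≤ m ∧ 2 ^ m < n ∧ n ≤ 3 ^ m) →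
      (completeBipartiteGraph (Fin m) (Fin n)).pc ℓ = 3) ∧
    (3 ≤ ℓ → 2 ≤ m → 3 ^ m < n → (completeBipartiteGraph (Fin m) (Fin n)).pc ℓ = 4) := by
  have h := pc_completeBipartite_general (Fin m) (Fin n) ℓ (by omega) (by simpa using hmn)
  simp only [Fintype.card_fin] at h
  exact ⟨h.1, h.2.1, fun h' => h.2.2.1 (h'.imp_right fun h' => ⟨h'.1, h'.2.2⟩), h.2.2.2⟩
end

section
/- If a graph G is 2-connected, then pc_{1,2}(G) ≤ 5. -/
open SimpleGraph

/-- A graph is 2-connected if it has at least 3 vertices and remains connected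
after the deletion of any single vertex. -/
def SimpleGraph.TwoConnected {V : Type*} (G : SimpleGraph V) : Prop :=
  3 ≤ Nat.card V ∧ ∀ v : V, (G.induce ({v}ᶜ : Set V)).Connected

/-!
Fix an edge `st`, give it color `0`, and order the vertices from `s` to `t`. The invariant is that
every vertex `u` of a proper initial segment is joined to `s` inside that segment by a path whose
last edge has color `1`, and which stays distance `ℓ`-proper when continued by edges of colors `0`
and `2`; symmetrically from the end `t`, with `1` and `2` exchanged. If `u` precedes `v`, then the
path from `u` to `s`, the edge `st` and the reversed path from `v` to `t` are disjoint and form a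
proper path: for `ℓ ≤ 3`, no conflict can reach across the three edges of colors `1`, `0`, `2` in
the middle.

Start with the order `s, t` and insert ears: an ear from `a` to `b`, where `a` precedes `b`, is
placed at a cut separating `a` from `b`. Each of its edges has to avoid only the `ℓ` colors behind
it on the way to `s` and the `ℓ` colors ahead of it on the way to `t`, so `2 * ℓ + 1` colors
suffice; its first edge gets color `1` if `a = s`, and its last edge color `2` if `b = t`. In a
2-connected graph there is an ear as long as some vertex is missing from the order.
-/

section DistNodup

variable {α : Type*} {ℓ : ℕ} {l m n : List α}

/-- Entries of `l` whose positions differ by at most `ℓ` are distinct. For the list of colors along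
a walk this is distance `ℓ`-properness. -/
def DistNodup (ℓ : ℕ) (l : List α) : Prop :=
  ∀ (i j : ℕ) (hi : i < l.length) (hj : j < l.length), i < j → j ≤ i + ℓ → l[i] ≠ l[j]

theorem distNodup_cons {x : α} : DistNodup ℓ (x :: l) ↔ x ∉ l.take ℓ ∧ DistNodup ℓ l := by
  simp only [List.mem_take_iff_getElem, DistNodup]
  constructor
  · refine fun h => ⟨?_, fun i j hi hj hij hle => ?_⟩
    · rintro ⟨j, hj, rfl⟩
      exact h 0 (j + 1) (by simp) (by grind) (by omega) (by omega) (by simp)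
    · have := h (i + 1) (j + 1) (by simpa) (by simpa) (by omega) (by omega)
      rwa [List.getElem_cons_succ, List.getElem_cons_succ] at this
  · rintro ⟨hx, h⟩ i j hi hj hij hle
    grind

namespace DistNodup

theorem of_nodup (h : l.Nodup) : DistNodup ℓ l :=
  fun _ _ _ _ hij _ he => hij.ne ((h.getElem_inj_iff).1 he)

theorem reverse (h : DistNodup ℓ l) : DistNodup ℓ l.reverse := by
  intro i j hi hj hij hle
  rw [List.length_reverse] at hi hj
  rw [List.getElem_reverse, List.getElem_reverse]
  exact (h _ _ (by omega) (by omega) (by omega) (by omega)).symm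

theorem of_suffix (h : DistNodup ℓ m) (hl : l <:+ m) : DistNodup ℓ l := by
  obtain ⟨k, rfl⟩ := hl
  induction k with
  | nil => exact h
  | cons x k ih => exact ih (distNodup_cons.1 h).2

theorem of_prefix (h : DistNodup ℓ m) (hl : l <+: m) : DistNodup ℓ l := by
  simpa using (h.reverse.of_suffix (List.reverse_suffix.2 hl)).reverse

theorem append_overlap (hlm : DistNodup ℓ (l ++ m)) (hmn : DistNodup ℓ (m ++ n))
    (hm : ℓ ≤ m.length) : DistNodup ℓ (l ++ m ++ n) := by
  induction l with
  | nil => exact hmn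
  | cons x l ih =>
    simp only [List.cons_append, distNodup_cons] at hlm ⊢
    refine ⟨?_, ih hlm.2⟩
    rw [List.take_append_of_le_length (by grind)]
    exact hlm.1

end DistNodup

theorem exists_lt_notMem {k : ℕ} (l : List ℕ) (h : l.length < k) : ∃ w < k, w ∉ l := by
  have hcard : l.toFinset.card < (Finset.range k).card := by
    simpa using l.toFinset_card_le.trans_lt h
  simpa using Finset.exists_mem_notMem_of_card_lt_card hcard

theorem DistNodup.exists_fill {D U : List ℕ} (hD : DistNodup ℓ D) (hU : DistNodup ℓ U) (k : ℕ) :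
    ∃ F : List ℕ, F.length = k ∧ (∀ z ∈ F, z < 2 * ℓ + 1) ∧
      DistNodup ℓ (F.reverse ++ D) ∧ DistNodup ℓ (F ++ U) := by
  induction k generalizing D with
  | zero => exact ⟨[], rfl, by simp, hD, hU⟩
  | succ k ih =>
    -- Only the first `ℓ` entries of `U` can ever be close to `w`, however much of the gap remains.
    obtain ⟨w, hw, hwDU⟩ := exists_lt_notMem (k := 2 * ℓ + 1) (D.take ℓ ++ U.take ℓ) (by grind)
    rw [List.mem_append, not_or] at hwDU
    obtain ⟨F, hlen, hlt, hFD, hFU⟩ := ih (distNodup_cons.2 ⟨hwDU.1, hD⟩)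
    have hwF : w ∉ F.take ℓ := by
      have := hFD.of_prefix (l := F.reverse ++ [w]) ⟨D, by simp⟩
      simpa [distNodup_cons] using (distNodup_cons.1 (by simpa using this.reverse)).1
    have hwFU : w ∉ (F ++ U).take ℓ := by
      rw [List.take_append, List.mem_append]
      exact not_or.2 ⟨hwF, fun hwU => hwDU.2 (List.take_subset_take_left U (Nat.sub_le _ _) hwU)⟩
    exact ⟨w :: F, by simp [hlen], List.forall_mem_cons.2 ⟨hw, hlt⟩, by simpa using hFD,
      distNodup_cons.2 ⟨hwFU, hFU⟩⟩

end DistNodup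

section ListLemmas

variable {α β : Type*}

theorem exists_append_of_mem_of_ne {L : List α} {u v : α} (hu : u ∈ L) (hv : v ∈ L)
    (huv : u ≠ v) : ∃ A B, L = A ++ B ∧ (u ∈ A ∧ v ∈ B ∨ v ∈ A ∧ u ∈ B) := by
  obtain ⟨A, B, rfl⟩ := List.append_of_mem hu
  rcases List.mem_append.1 hv with hvA | hvB
  · exact ⟨A, u :: B, rfl, .inr ⟨hvA, by simp⟩⟩
  · exact ⟨A ++ [u], B, by simp, .inl ⟨by simp, (List.mem_cons.1 hvB).resolve_left huv.symm⟩⟩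

theorem exists_map_eq_of_nodup (c : α → β) {l : List α} {g : List β} (hl : l.Nodup)
    (hlen : l.length = g.length) : ∃ c' : α → β, l.map c' = g ∧ ∀ e ∉ l, c' e = c e := by
  classical
  refine ⟨fun e => g[l.idxOf e]?.getD (c e), List.ext_getElem (by simpa) fun i h₁ h₂ => ?_,
    fun e he => ?_⟩
  · simp [hl.idxOf_getElem, h₂]
  · simp [List.idxOf_eq_length he, hlen]

end ListLemmas

section IsApproach

variable {ℓ β γ : ℕ} {D U : List ℕ}

/-- `D` is a possible list of colors along a path leading to an end of the root edge, which itself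
has color `0`: if `D` is nonempty its last color is `β`, and `D` can be continued through the root
edge by an edge of color `γ`. The path of length zero, with `D = []`, is allowed. -/
structure IsApproach (ℓ β γ : ℕ) (D : List ℕ) : Prop where
  distNodup : DistNodup ℓ (D ++ [0, γ])
  getLast : ∀ x ∈ D.getLast?, x = β

namespace IsApproach

theorem of_suffix (h : IsApproach ℓ β γ U) (hD : D <:+ U) : IsApproach ℓ β γ D where
  distNodup := by
    obtain ⟨k, rfl⟩ := hD
    exact h.distNodup.of_suffix ⟨k, by simp⟩
  getLast x hx := by
    obtain ⟨k, rfl⟩ := hD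
    exact h.getLast x (by simp_all [List.getLast?_append])

theorem exists_cons (h : IsApproach ℓ β γ D) (hβ : β < 2 * ℓ + 1) (hβγ : [β, 0, γ].Nodup) :
    ∃ e < 2 * ℓ + 1, IsApproach ℓ β γ (e :: D) := by
  rcases eq_or_ne D [] with rfl | hne
  · exact ⟨β, hβ, .of_nodup hβγ, by simp⟩
  · obtain ⟨e, he, hD⟩ := exists_lt_notMem (k := 2 * ℓ + 1) ((D ++ [0, γ]).take ℓ) (by grind)
    exact ⟨e, he, distNodup_cons.2 ⟨hD, h.distNodup⟩, by
      simpa [List.getLast?_cons_of_ne_nil hne] using h.getLast⟩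

theorem append_reverse (hD : IsApproach ℓ β γ D) (hU : IsApproach ℓ γ β U) (hℓ : ℓ ≤ 3) :
    DistNodup ℓ (D ++ 0 :: U.reverse) := by
  have hU' := hU.distNodup.reverse
  rcases D.eq_nil_or_concat with rfl | ⟨D, d, rfl⟩
  · exact hU'.of_suffix ⟨[β], by simp⟩
  rcases U.eq_nil_or_concat with rfl | ⟨U, u, rfl⟩
  · exact hD.distNodup.of_prefix ⟨[γ], by simp⟩
  obtain rfl : d = β := hD.getLast d (by simp)
  obtain rfl : u = γ := hU.getLast u (by simp)
  simpa using DistNodup.append_overlap (l := D) (m := [d, 0, u]) (n := U.reverse)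
    (by simpa using hD.distNodup) (by simpa using hU') hℓ

theorem exists_fill {β' γ' e f : ℕ} (hD : IsApproach ℓ β γ (e :: D))
    (hU : IsApproach ℓ β' γ' (f :: U)) (k : ℕ) :
    ∃ F : List ℕ, F.length = k ∧ (∀ z ∈ F, z < 2 * ℓ + 1) ∧
      IsApproach ℓ β γ (F.reverse ++ e :: D) ∧ IsApproach ℓ β' γ' (F ++ f :: U) := by
  obtain ⟨F, hlen, hlt, hFD, hFU⟩ := hD.distNodup.exists_fill hU.distNodup k
  refine ⟨F, hlen, hlt, ⟨by simpa using hFD, ?_⟩, ⟨by simpa using hFU, ?_⟩⟩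
  · rw [List.getLast?_append_cons]
    exact hD.getLast
  · rw [List.getLast?_append_cons]
    exact hU.getLast

end IsApproach

end IsApproach

section Graph

variable {V : Type*} {G : SimpleGraph V} {ℓ k β γ : ℕ} {c c' : Sym2 V → ℕ}
  {s t a b u v x y z : V} {A A' B L : List V} {S : Set V} {m : G.Walk x y}

theorem isDistProper_iff_distNodup {p : G.Walk u v} :
    p.IsDistProper ℓ c ↔ DistNodup ℓ (p.edges.map c) := by
  simp only [Walk.IsDistProper, DistNodup, List.length_map, List.getElem_map]

theorem isPath_append_cons {p : G.Walk u v} {q : G.Walk x y} (hp : p.IsPath) (hq : q.IsPath)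
    (hvx : G.Adj v x) (hpq : p.support.Disjoint q.support) : (p.append (.cons hvx q)).IsPath := by
  rw [Walk.isPath_def, Walk.support_append, Walk.support_cons, List.tail_cons]
  exact hp.support_nodup.append hq.support_nodup hpq

theorem exists_append_of_support_eq_append {A B : List V} (hm : m.support = A ++ B) (hv : v ∈ A) :
    ∃ (m₁ : G.Walk x v) (m₂ : G.Walk v y), m = m₁.append m₂ ∧ m₁.support ⊆ A := by
  obtain ⟨i, hi, rfl⟩ := List.getElem_of_mem hv
  have hget : A[i] = m.getVert i := by
    have hlen := m.length_support
    rw [Walk.getVert_eq_support_getElem _ (by grind)]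
    simp [hm, hi]
  rw [hget]
  refine ⟨m.take i, m.drop i, by simp, ?_⟩
  rw [Walk.support_take, hm, List.take_append_of_le_length hi]
  exact List.take_subset _ A

theorem exists_isPath_until_mem (w : G.Walk x t) (hx : x ∉ S) (ht : t ∈ S) :
    ∃ (y b : V) (m : G.Walk x y), m.IsPath ∧ (∀ v ∈ m.support, v ∉ S) ∧ G.Adj y b ∧ b ∈ S ∧
      b ∈ w.support := by
  classical
  induction w with
  | nil => exact absurd ht hx
  | @cons x z t hxz w ih =>
    by_cases hz : z ∈ S
    · exact ⟨x, z, .nil, .nil, by simpa using hx, hxz, hz, by simp⟩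
    · obtain ⟨y, b, m, -, hmS, hyb, hb, hbw⟩ := ih hz ht
      refine ⟨y, b, (Walk.cons hxz m).bypass, Walk.bypass_isPath _, fun v hv => ?_, hyb, hb,
        by simp [hbw]⟩
      rcases List.mem_cons.1 (Walk.support_bypass_subset_support _ hv) with rfl | hv
      exacts [hx, hmS v hv]

/-- `d` is a path inside `A` to an end `s` of the root edge along which the colors form an
approach to the root edge. -/
structure IsRoute (ℓ β γ : ℕ) (c : Sym2 V → ℕ) (A : List V) (d : G.Walk v s) : Prop where
  isPath : d.IsPath
  support_subset : d.support ⊆ A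
  isApproach : IsApproach ℓ β γ (d.edges.map c)

namespace IsRoute

theorem mono {d : G.Walk v s} (h : IsRoute ℓ β γ c A d) (hA : A ⊆ A') :
    IsRoute ℓ β γ c A' d :=
  ⟨h.isPath, List.Subset.trans h.support_subset hA, h.isApproach⟩

theorem map_edges_eq {d : G.Walk v s} (h : IsRoute ℓ β γ c A d)
    (hc : ∀ e, (∀ z ∈ e, z ∈ A) → c' e = c e) : d.edges.map c' = d.edges.map c :=
  List.map_congr_left fun e he =>
    hc e fun _ hz => h.support_subset (Walk.mem_support_of_mem_edges he hz)

theorem congr {d : G.Walk v s} (h : IsRoute ℓ β γ c A d)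
    (hc : ∀ e, (∀ z ∈ e, z ∈ A) → c' e = c e) : IsRoute ℓ β γ c' A d :=
  ⟨h.isPath, h.support_subset, h.map_edges_eq hc ▸ h.isApproach⟩

theorem extend {d : G.Walk a s} (h : IsRoute ℓ β γ c A d) (hax : G.Adj a x) (hm : m.IsPath)
    (hmA : m.support.Disjoint A)
    (happ : IsApproach ℓ β γ ((m.edges.map c).reverse ++ c s(a, x) :: d.edges.map c)) :
    IsRoute ℓ β γ c (A ++ m.support) (m.reverse.append (.cons hax.symm d)) where
  isPath := isPath_append_cons hm.reverse h.isPath hax.symm fun z hzm hzd =>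
    hmA (by simpa using hzm) (h.support_subset hzd)
  support_subset := by
    rw [Walk.support_append, Walk.support_cons, List.tail_cons, Walk.support_reverse]
    have := h.support_subset
    grind
  isApproach := by
    simpa [Walk.edges_append, Sym2.eq_swap, List.map_reverse] using happ

theorem exists_extend_prefix {d : G.Walk a s} (h : IsRoute ℓ β γ c A d) (hax : G.Adj a x)
    (hm : m.IsPath) (hmA : m.support.Disjoint A)
    (happ : IsApproach ℓ β γ ((m.edges.map c).reverse ++ c s(a, x) :: d.edges.map c))
    {P Q : List V} (hPQ : m.support = P ++ Q) (hv : v ∈ P) :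
    ∃ r : G.Walk v s, IsRoute ℓ β γ c (A ++ P) r := by
  obtain ⟨m₁, m₂, rfl, hm₁P⟩ := exists_append_of_support_eq_append hPQ hv
  have happ₁ : IsApproach ℓ β γ ((m₁.edges.map c).reverse ++ c s(a, x) :: d.edges.map c) :=
    happ.of_suffix ⟨(m₂.edges.map c).reverse, by simp [Walk.edges_append]⟩
  have hm₁A : m₁.support.Disjoint A :=
    List.disjoint_of_subset_left (Walk.support_subset_support_append_left m₁ m₂) hmA
  have hsub : A ++ m₁.support ⊆ A ++ P :=
    List.append_subset.2 ⟨List.subset_append_left A P, List.subset_append_of_subset_right A hm₁P⟩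
  exact ⟨_, (h.extend hax hm.of_append_left hm₁A happ₁).mono hsub⟩

end IsRoute

/-- Every vertex of a proper prefix of the vertex order `L` has a route to `s` inside that
prefix. -/
def PrefixRouted (G : SimpleGraph V) (ℓ β γ : ℕ) (c : Sym2 V → ℕ) (s : V) (L : List V) : Prop :=
  ∀ A B, A ++ B = L → B ≠ [] → ∀ v ∈ A, ∃ d : G.Walk v s, IsRoute ℓ β γ c A d

namespace PrefixRouted

theorem congr (h : PrefixRouted G ℓ β γ c s L)
    (hc : ∀ e, (∀ z ∈ e, z ∈ L) → c' e = c e) : PrefixRouted G ℓ β γ c' s L := by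
  rintro A B rfl hB v hv
  obtain ⟨d, hd⟩ := h A B rfl hB v hv
  exact ⟨d, hd.congr fun e he => hc e fun z hz => List.mem_append_left B (he z hz)⟩

theorem pair (hγ : γ ≠ 0) : PrefixRouted G ℓ β γ c s [s, t] := by
  intro A B hAB hB v hv
  obtain rfl : A = [s] := by
    rcases A with _ | ⟨x, _ | ⟨y, A⟩⟩ <;> simp_all
  obtain rfl := List.mem_singleton.1 hv
  exact ⟨.nil, .nil, by simp, .of_nodup (by simpa using hγ.symm), by simp⟩

theorem insert (h : PrefixRouted G ℓ β γ c s (A ++ B)) (hB : B ≠ []) {d : G.Walk a s}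
    (hd : IsRoute ℓ β γ c A d) (hax : G.Adj a x) (hm : m.IsPath) (hmA : m.support.Disjoint A)
    (happ : IsApproach ℓ β γ ((m.edges.map c).reverse ++ c s(a, x) :: d.edges.map c)) :
    PrefixRouted G ℓ β γ c s (A ++ m.support ++ B) := by
  have old_route : ∀ A' B' X, A' ++ B' = A ++ B → B' ≠ [] → A' ⊆ X → ∀ v ∈ A',
      ∃ d : G.Walk v s, IsRoute ℓ β γ c X d := by
    intro A' B' X hAB hB' hX v hv
    obtain ⟨d, hd⟩ := h A' B' hAB hB' v hv
    exact ⟨d, hd.mono hX⟩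
  intro A' B' hAB hB' v hv
  rw [List.append_assoc] at hAB
  rcases List.append_eq_append_iff.1 hAB with ⟨X, rfl, -⟩ | ⟨X, rfl, hX⟩
  · exact h A' (X ++ B) (by simp) (by simp [hB]) v hv
  rcases List.append_eq_append_iff.1 hX with ⟨Y, rfl, rfl⟩ | ⟨Q, hXQ, -⟩
  · have hv' : v ∈ A ++ Y ∨ v ∈ m.support := by grind
    rcases hv' with hv | hv
    · exact old_route (A ++ Y) B' _ (by simp) hB' (by grind) v hv
    · obtain ⟨r, hr⟩ := hd.exists_extend_prefix hax hm hmA happ (List.append_nil _).symm hv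
      exact ⟨r, hr.mono (by grind)⟩
  · rcases List.mem_append.1 hv with hv | hv
    · exact old_route A B _ rfl hB (List.subset_append_left A X) v hv
    · exact hd.exists_extend_prefix hax hm hmA happ hXQ hv

end PrefixRouted

/-- The path from `a` through `m` to `b` is an ear of the vertex set `S`: its ends `a ≠ b` lie in
`S`, and `m` consists of its inner vertices, of which there is at least one. -/
structure IsEar (S : Set V) (a b : V) (m : G.Walk x y) : Prop where
  start_mem : a ∈ S
  end_mem : b ∈ S
  ne : a ≠ b
  adj_start : G.Adj a x
  adj_end : G.Adj y b
  isPath : m.IsPath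
  notMem : ∀ v ∈ m.support, v ∉ S

namespace IsEar

theorem reverse (h : IsEar S a b m) : IsEar S b a m.reverse where
  start_mem := h.end_mem
  end_mem := h.start_mem
  ne := h.ne.symm
  adj_start := h.adj_end.symm
  adj_end := h.adj_start.symm
  isPath := h.isPath.reverse
  notMem := by simpa using h.notMem

theorem nodup_edges (h : IsEar S a b m) : (s(a, x) :: (m.edges ++ [s(y, b)])).Nodup := by
  have ha : s(a, x) ∉ m.edges := fun he =>
    h.notMem a (m.fst_mem_support_of_mem_edges he) h.start_mem
  have hb : s(y, b) ∉ m.edges := fun he =>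
    h.notMem b (m.snd_mem_support_of_mem_edges he) h.end_mem
  have hab : s(a, x) ≠ s(y, b) := by
    have hay : a ≠ y := fun hay => h.notMem y m.end_mem_support (hay ▸ h.start_mem)
    simp [h.ne, hay]
  exact List.nodup_cons.2 ⟨by simp [ha, hab],
    h.isPath.isTrail.edges_nodup.append (by simp) (by simpa using hb)⟩

theorem exists_mem_notMem_of_mem_edges (h : IsEar S a b m) {e : Sym2 V}
    (he : e ∈ s(a, x) :: (m.edges ++ [s(y, b)])) : ∃ v ∈ e, v ∉ S := by
  simp only [List.mem_cons, List.mem_append, List.not_mem_nil, or_false] at he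
  rcases he with rfl | he | rfl
  · exact ⟨x, Sym2.mem_mk_right a x, h.notMem x m.start_mem_support⟩
  · exact ⟨_, e.out_fst_mem, h.notMem _ (Walk.mem_support_of_mem_edges he e.out_fst_mem)⟩
  · exact ⟨y, Sym2.mem_mk_left y b, h.notMem y m.end_mem_support⟩

theorem exists_recoloring (h : IsEar S a b m) (hc : ∀ e, c e < k) {p q : ℕ} {F : List ℕ}
    (hF : F.length = m.length) (hp : p < k) (hFk : ∀ z ∈ F, z < k) (hq : q < k) :
    ∃ c' : Sym2 V → ℕ, (∀ e, c' e < k) ∧ (∀ e, (∀ v ∈ e, v ∈ S) → c' e = c e) ∧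
      c' s(a, x) = p ∧ m.edges.map c' = F ∧ c' s(y, b) = q := by
  obtain ⟨c', hmap, hc'⟩ := exists_map_eq_of_nodup (g := p :: (F ++ [q])) c h.nodup_edges
    (by simp [hF])
  have hlt : ∀ z ∈ p :: (F ++ [q]), z < k := by grind
  refine ⟨c', fun e => ?_, fun e heS => hc' e fun he => ?_, ?_⟩
  · by_cases he : e ∈ s(a, x) :: (m.edges ++ [s(y, b)])
    · exact hlt _ (hmap ▸ List.mem_map_of_mem he)
    · exact hc' e he ▸ hc e
  · obtain ⟨v, hv, hvS⟩ := h.exists_mem_notMem_of_mem_edges he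
    exact hvS (heS v hv)
  · rw [List.map_cons, List.map_append, List.cons.injEq] at hmap
    obtain ⟨hmF, hmq⟩ := List.append_inj hmap.2 (by simp [hF])
    exact ⟨hmap.1, hmF, by simpa using hmq⟩

theorem exists_recoloring_isApproach (h : IsEar S a b m) (hc : ∀ e, c e < 2 * ℓ + 1)
    (hβ : β < 2 * ℓ + 1) (hγ : γ < 2 * ℓ + 1) (hβγ : [β, 0, γ].Nodup) {D U : List ℕ}
    (hD : IsApproach ℓ β γ D) (hU : IsApproach ℓ γ β U) :
    ∃ c' : Sym2 V → ℕ, (∀ e, c' e < 2 * ℓ + 1) ∧ (∀ e, (∀ v ∈ e, v ∈ S) → c' e = c e) ∧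
      IsApproach ℓ β γ ((m.edges.map c').reverse ++ c' s(a, x) :: D) ∧
      IsApproach ℓ γ β (m.edges.map c' ++ c' s(y, b) :: U) := by
  obtain ⟨p, hp, hpD⟩ := hD.exists_cons hβ hβγ
  obtain ⟨q, hq, hqU⟩ := hU.exists_cons hγ (by simpa using List.nodup_reverse.2 hβγ)
  obtain ⟨F, hlen, hF, hFD, hFU⟩ := hpD.exists_fill hqU m.length
  obtain ⟨c', hlt, hcS, rfl, rfl, rfl⟩ := h.exists_recoloring hc hlen hp hF hq
  exact ⟨c', hlt, hcS, hFD, hFU⟩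

end IsEar

theorem PrefixRouted.insert_ear (h : PrefixRouted G ℓ β γ c s (A ++ B))
    (hS : ∀ z ∈ A ++ B, z ∈ S) (hB : B ≠ []) (hm : IsEar S a b m)
    (hc : ∀ e, (∀ z ∈ e, z ∈ S) → c' e = c e) {d : G.Walk a s} (hd : IsRoute ℓ β γ c A d)
    (happ : IsApproach ℓ β γ ((m.edges.map c').reverse ++ c' s(a, x) :: d.edges.map c)) :
    PrefixRouted G ℓ β γ c' s (A ++ m.support ++ B) := by
  have hcA : ∀ e, (∀ z ∈ e, z ∈ A) → c' e = c e := fun e he =>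
    hc e fun z hz => hS z (List.mem_append_left B (he z hz))
  have hmA : m.support.Disjoint A := fun z hz hzA =>
    hm.notMem z hz (hS z (List.mem_append_left B hzA))
  exact (h.congr fun e he => hc e fun z hz => hS z (he z hz)).insert hB (hd.congr hcA)
    hm.adj_start hm.isPath hmA (by rwa [hd.map_edges_eq hcA])

theorem exists_walk_notMem_support_of_twoConnected (hG : G.TwoConnected) (hx : x ≠ a)
    (hy : y ≠ a) : ∃ w : G.Walk x y, a ∉ w.support := by
  obtain ⟨w⟩ := (hG.2 a).preconnected ⟨x, hx⟩ ⟨y, hy⟩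
  refine ⟨w.map (Embedding.induce _).toHom, fun ha => ?_⟩
  obtain ⟨z, -, hz⟩ := List.mem_map.1 (Walk.support_map (Embedding.induce _).toHom w ▸ ha)
  exact z.2 hz

theorem exists_isEar_of_twoConnected (hG : G.TwoConnected) (hs : s ∈ S) (ht : t ∈ S)
    (hst : s ≠ t) (hz : z ∉ S) : ∃ (a b x y : V) (m : G.Walk x y), IsEar S a b m := by
  obtain ⟨w, hsw⟩ := exists_walk_notMem_support_of_twoConnected hG
    (ne_of_mem_of_not_mem hs hz).symm hst.symm
  obtain ⟨x, a, p, -, hpS, hxa, ha, haw⟩ := exists_isPath_until_mem w hz ht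
  have hx : x ∉ S := hpS x p.end_mem_support
  have hsa : s ≠ a := (ne_of_mem_of_not_mem haw hsw).symm
  obtain ⟨w', haw'⟩ := exists_walk_notMem_support_of_twoConnected hG hxa.ne hsa
  obtain ⟨y, b, m, hm, hmS, hyb, hb, hbw'⟩ := exists_isPath_until_mem w' hx hs
  exact ⟨a, b, x, y, m, ha, hb, (ne_of_mem_of_not_mem hbw' haw').symm, hxa.symm, hyb, hm, hmS⟩

theorem finite_of_twoConnected (hG : G.TwoConnected) : Finite V :=
  Nat.finite_of_card_ne_zero (by have := hG.1; omega)

theorem exists_adj_of_twoConnected (hG : G.TwoConnected) : ∃ s t, G.Adj s t := by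
  have := finite_of_twoConnected hG
  obtain ⟨x, -, y, -, z, -, hxy, hxz, hyz⟩ :=
    (Set.two_lt_ncard).1 ((Set.ncard_univ V).symm ▸ hG.1 : 2 < (Set.univ : Set V).ncard)
  obtain ⟨w, -⟩ := exists_walk_notMem_support_of_twoConnected hG hxz hyz
  cases w with
  | nil => exact absurd rfl hxy
  | cons h _ => exact ⟨_, _, h⟩

/-- `L` orders some vertices of `G`, among them the ends of the root edge `st`, so that every
proper prefix is routed to `s` and every proper suffix to `t`; suffixes are encoded as prefixes of
`L.reverse`. The last colors `1` and `2` of the routes distinguish the two ends. -/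
structure IsBipolar (G : SimpleGraph V) (ℓ : ℕ) (s t : V) (c : Sym2 V → ℕ) (L : List V) :
    Prop where
  adj : G.Adj s t
  color_root : c s(s, t) = 0
  color_lt : ∀ e, c e < 2 * ℓ + 1
  nodup : L.Nodup
  source_mem : s ∈ L
  target_mem : t ∈ L
  toSource : PrefixRouted G ℓ 1 2 c s L
  toTarget : PrefixRouted G ℓ 2 1 c t L.reverse

namespace IsBipolar

theorem pair (hst : G.Adj s t) : IsBipolar G ℓ s t (fun _ => 0) [s, t] :=
  ⟨hst, rfl, by simp, by simp [hst.ne], by simp, by simp, .pair two_ne_zero, .pair one_ne_zero⟩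

theorem exists_isRoute_source (h : IsBipolar G ℓ s t c (A ++ B)) (hu : u ∈ A) (hv : v ∈ B) :
    ∃ d : G.Walk u s, IsRoute ℓ 1 2 c A d :=
  h.toSource A B rfl (List.ne_nil_of_mem hv) u hu

theorem exists_isRoute_target (h : IsBipolar G ℓ s t c (A ++ B)) (hu : u ∈ A) (hv : v ∈ B) :
    ∃ r : G.Walk v t, IsRoute ℓ 2 1 c B.reverse r :=
  h.toTarget B.reverse A.reverse List.reverse_append.symm
    (by simpa using List.ne_nil_of_mem hu) v (List.mem_reverse.2 hv)

theorem exists_distProper_path_of_append (h : IsBipolar G ℓ s t c (A ++ B)) (hℓ : ℓ ≤ 3)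
    (hu : u ∈ A) (hv : v ∈ B) : ∃ p : G.Walk u v, p.IsPath ∧ p.IsDistProper ℓ c := by
  obtain ⟨d, hd⟩ := h.exists_isRoute_source hu hv
  obtain ⟨r, hr⟩ := h.exists_isRoute_target hu hv
  have hdr : d.support.Disjoint r.reverse.support := fun z hzd hzr =>
    List.disjoint_of_nodup_append h.nodup (hd.support_subset hzd)
      (by simpa using hr.support_subset (by simpa using hzr))
  refine ⟨d.append (.cons h.adj r.reverse), isPath_append_cons hd.isPath hr.isPath.reverse _ hdr,
    isDistProper_iff_distNodup.2 ?_⟩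
  simpa [Walk.edges_append, List.map_reverse, h.color_root] using
    hd.isApproach.append_reverse hr.isApproach hℓ

theorem exists_distProper_path (h : IsBipolar G ℓ s t c L) (hℓ : ℓ ≤ 3) (hu : u ∈ L)
    (hv : v ∈ L) (huv : u ≠ v) : ∃ p : G.Walk u v, p.IsPath ∧ p.IsDistProper ℓ c := by
  obtain ⟨A, B, rfl, ⟨hu, hv⟩ | ⟨hv, hu⟩⟩ := exists_append_of_mem_of_ne hu hv huv
  · exact h.exists_distProper_path_of_append hℓ hu hv
  · obtain ⟨p, hp, hpc⟩ := h.exists_distProper_path_of_append hℓ hv hu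
    refine ⟨p.reverse, hp.reverse, isDistProper_iff_distNodup.2 ?_⟩
    rw [Walk.edges_reverse, List.map_reverse]
    exact (isDistProper_iff_distNodup.1 hpc).reverse

theorem exists_insert (h : IsBipolar G ℓ s t c (A ++ B)) (hℓ : 1 ≤ ℓ)
    (hm : IsEar {z | z ∈ A ++ B} a b m) (ha : a ∈ A) (hb : b ∈ B) :
    ∃ c', IsBipolar G ℓ s t c' (A ++ m.support ++ B) := by
  obtain ⟨d, hd⟩ := h.exists_isRoute_source ha hb
  obtain ⟨r, hr⟩ := h.exists_isRoute_target ha hb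
  obtain ⟨c', hlt, hc', hmd, hmr⟩ := hm.exists_recoloring_isApproach h.color_lt
    (show 1 < 2 * ℓ + 1 by omega) (show 2 < 2 * ℓ + 1 by omega) (by decide) hd.isApproach
    hr.isApproach
  have hroot : c' s(s, t) = 0 :=
    (hc' _ (Sym2.ball.2 ⟨h.source_mem, h.target_mem⟩)).trans h.color_root
  have hnodup : (A ++ m.support ++ B).Nodup := by
    rw [(List.perm_append_comm.append_right B).nodup_iff, List.append_assoc]
    exact hm.isPath.support_nodup.append h.nodup hm.notMem
  have hmem : ∀ z ∈ A ++ B, z ∈ A ++ m.support ++ B := by grind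
  have hsource : PrefixRouted G ℓ 1 2 c' s (A ++ m.support ++ B) :=
    h.toSource.insert_ear (fun _ => id) (List.ne_nil_of_mem hb) hm hc' hd hmd
  have htarget : PrefixRouted G ℓ 2 1 c' t (B.reverse ++ m.reverse.support ++ A.reverse) := by
    have hold : PrefixRouted G ℓ 2 1 c t (B.reverse ++ A.reverse) :=
      List.reverse_append ▸ h.toTarget
    refine hold.insert_ear (by simp [or_comm]) (by simpa using List.ne_nil_of_mem ha) hm.reverse
      hc' hr ?_
    rwa [Walk.edges_reverse, List.map_reverse, List.reverse_reverse, Sym2.eq_swap]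
  exact ⟨c', h.adj, hroot, hlt, hnodup, hmem s h.source_mem, hmem t h.target_mem, hsource,
    by simpa using htarget⟩

theorem exists_longer (h : IsBipolar G ℓ s t c L) (hℓ : 1 ≤ ℓ) (hG : G.TwoConnected)
    (hz : z ∉ L) : ∃ c' L', L.length < L'.length ∧ IsBipolar G ℓ s t c' L' := by
  obtain ⟨a, b, x, y, m, hm⟩ := exists_isEar_of_twoConnected hG (S := {v | v ∈ L}) h.source_mem
    h.target_mem h.adj.ne hz
  obtain ⟨A, B, rfl, ⟨ha, hb⟩ | ⟨hb, ha⟩⟩ :=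
    exists_append_of_mem_of_ne hm.start_mem hm.end_mem hm.ne
  · obtain ⟨c', hc'⟩ := h.exists_insert hℓ hm ha hb
    exact ⟨c', _, by simp, hc'⟩
  · obtain ⟨c', hc'⟩ := h.exists_insert hℓ hm.reverse hb ha
    exact ⟨c', _, by simp, hc'⟩

end IsBipolar

theorem exists_isBipolar_of_twoConnected (hG : G.TwoConnected) (hℓ : 1 ≤ ℓ) :
    ∃ s t c L, IsBipolar G ℓ s t c L ∧ ∀ z, z ∈ L := by
  obtain ⟨s, t, hst⟩ := exists_adj_of_twoConnected hG
  have := finite_of_twoConnected hG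
  have := Fintype.ofFinite V
  by_contra! hcon
  have unbounded : ∀ n : ℕ, ∃ c L, n ≤ L.length ∧ IsBipolar G ℓ s t c L := by
    intro n
    induction n with
    | zero => exact ⟨_, _, Nat.zero_le _, .pair hst⟩
    | succ n ih =>
      obtain ⟨c, L, hn, h⟩ := ih
      obtain ⟨z, hz⟩ := hcon s t c L h
      obtain ⟨c', L', hlt, h'⟩ := h.exists_longer hℓ hG hz
      exact ⟨c', L', by omega, h'⟩
  obtain ⟨c, L, hn, h⟩ := unbounded (Fintype.card V + 1)
  exact absurd h.nodup.length_le_card (by omega)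

end Graph

theorem pc_le_five_of_twoConnected_general {V : Type*} (G : SimpleGraph V) (hG : G.TwoConnected)
    {ℓ : ℕ} (hℓ : 1 ≤ ℓ) (hℓ3 : ℓ ≤ 3) : G.pc ℓ ≤ 2 * ℓ + 1 := by
  obtain ⟨s, t, c, L, h, hL⟩ := exists_isBipolar_of_twoConnected hG hℓ
  exact Nat.sInf_le ⟨c, fun e _ => h.color_lt e, fun u v huv =>
    h.exists_distProper_path hℓ3 (hL u) (hL v) huv⟩

/-- If a graph `G` is `2`-connected, then `pc_{1,2}(G) ≤ 5`. -/
theorem pc_le_five_of_twoConnected {V : Type*} [Fintype V] (G : SimpleGraph V)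
    (hG : G.TwoConnected) : G.pc 2 ≤ 5 :=
  pc_le_five_of_twoConnected_general G hG (ℓ := 2) (by decide) (by decide)
end

section
/- Let G be a graph whose complement Ḡ is connected with diameter at least 4. Then G is connected and pc_{1,2}(G) ≤ 3. -/
open SimpleGraph

/-!
Layer the vertices by their distance in `Gᶜ` from an end of a long geodesic, merging all distances
at least `4`. Vertices in distinct, non-consecutive layers are adjacent in `G`, so it remains to
connect vertices in equal or consecutive layers by paths of length at most four that visit other
layers. The color of an edge depends only on the layers of its endpoints, except that the edges
from layer `1` to one vertex `t` of layer `3` are recolored: two vertices of layer `1` are then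
joined through `t`, whereas layer `3` is joined through layer `1` by edges that avoid `t`.
-/

theorem nodup_cons_append_singleton_of_map {α β : Type*} {f : α → β} {l : List α} {a b : α}
    (hab : a ≠ b) (hf : f a = f b) (h : (f b :: l.map f).Nodup) : (a :: (l ++ [b])).Nodup := by
  obtain ⟨hb, hl⟩ := List.nodup_cons.1 h
  have hbl : b ∉ l := fun hmem ↦ hb (List.mem_map_of_mem hmem)
  have hal : a ∉ l := fun hmem ↦ hb (hf ▸ List.mem_map_of_mem hmem)
  refine List.nodup_cons.2 ⟨by simp [hal, hab], ?_⟩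
  simpa using List.Nodup.concat hbl hl.of_map

section DistProper

variable {V : Type*} {G : SimpleGraph V} {c : Sym2 V → ℕ} {ℓ k : ℕ} {u v : V}

/-- Two vertices are joined by a distance `ℓ`-proper path under the edge-coloring `c`; this is the
condition that `SimpleGraph.IsPCColoring` imposes on pairs of distinct vertices. -/
def DistProperConnected (G : SimpleGraph V) (ℓ : ℕ) (c : Sym2 V → ℕ) (u v : V) : Prop :=
  ∃ p : G.Walk u v, p.IsPath ∧ p.IsDistProper ℓ c

namespace DistProperConnected

theorem refl (u : V) : DistProperConnected G ℓ c u u :=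
  ⟨.nil, .nil, fun _ _ hi ↦ by simp at hi⟩

theorem symm (h : DistProperConnected G ℓ c u v) : DistProperConnected G ℓ c v u := by
  obtain ⟨p, hpath, hproper⟩ := h
  refine ⟨p.reverse, hpath.reverse, fun i j hi hj hij hji ↦ ?_⟩
  rw [Walk.edges_reverse, List.length_reverse] at hi hj
  simp only [Walk.edges_reverse, List.getElem_reverse]
  exact (hproper _ _ (by omega) (by omega) (by omega) (by omega)).symm

theorem of_isPath {p : G.Walk u v} {colors : List ℕ} (hpath : p.IsPath)
    (hmap : p.edges.map c = colors)
    (hcolors : ∀ j < colors.length, ∀ i < j, j ≤ i + ℓ → colors[i]? ≠ colors[j]?) :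
    DistProperConnected G ℓ c u v := by
  refine ⟨p, hpath, fun i j hi hj hij hji ↦ ?_⟩
  subst hmap
  have hne := hcolors j (by simpa using hj) i hij hji
  simpa [List.getElem?_eq_getElem hi, List.getElem?_eq_getElem hj] using hne

theorem of_adj (h : G.Adj u v) : DistProperConnected G ℓ c u v :=
  of_isPath (p := h.toWalk) (colors := [c s(u, v)]) (by simp [h.ne]) (by simp) (by simp)

theorem of_adj_of_adj {w : V} (huw : G.Adj u w) (hwv : G.Adj w v) (huv : u ≠ v)
    (hcolor : c s(u, w) ≠ c s(w, v)) : DistProperConnected G ℓ c u v := by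
  refine of_isPath (p := .cons huw hwv.toWalk) (colors := [c s(u, w), c s(w, v)])
    (by simp [huw.ne, hwv.ne, huv]) (by simp) fun j hj i hij _ ↦ ?_
  obtain ⟨rfl, rfl⟩ : i = 0 ∧ j = 1 := by
    simp only [List.length_cons, List.length_nil] at hj
    omega
  simpa using hcolor

end DistProperConnected

theorem connected_of_isPCColoring [Nonempty V] (h : G.IsPCColoring ℓ k c) : G.Connected := by
  refine ⟨fun u v ↦ ?_⟩
  obtain rfl | huv := eq_or_ne u v
  · exact .rfl
  · obtain ⟨p, -⟩ := h.2 u v huv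
    exact p.reachable

theorem pc_le_of_isPCColoring (h : G.IsPCColoring ℓ k c) : G.pc ℓ ≤ k :=
  Nat.sInf_le ⟨c, h⟩

end DistProper

/-- A partition of the vertices into nonempty layers `0, …, n`, the layer `0` being a single vertex,
in which non-adjacent vertices lie in equal or consecutive layers. The model is the layering by
distance from a vertex in the complement. -/
structure IsColayering {V : Type*} (G : SimpleGraph V) (n : ℕ) (L : V → ℕ) : Prop where
  eq_of_eq_zero : ∀ ⦃u v⦄, L u = 0 → L v = 0 → u = v
  exists_eq : ∀ k ≤ n, ∃ v, L v = k
  le : ∀ v, L v ≤ n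
  adj : ∀ ⦃u v⦄, L u + 2 ≤ L v → G.Adj u v

section TruncDist

variable {V : Type*} {G : SimpleGraph V} {n k : ℕ} {u v x y : V}

theorem exists_eq_of_le_of_le_of_reachable {f : V → ℕ} (hf : ∀ u v, G.Adj u v → f v ≤ f u + 1)
    (hxy : G.Reachable x y) (hx : f x ≤ k) (hy : k ≤ f y) : ∃ z, f z = k := by
  obtain ⟨p⟩ := hxy
  induction p with
  | nil => exact ⟨_, hx.antisymm hy⟩
  | @cons u v _ huv _ ih =>
    by_cases hv : f v ≤ k
    · exact ih hv hy
    · have := hf u v huv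
      exact ⟨u, by omega⟩

/-- The distance from `x` in `G` truncated at `n`, with value `n` at the vertices that are not
reachable from `x` (where `SimpleGraph.dist` would be `0`). -/
noncomputable def truncDist (G : SimpleGraph V) (x : V) (n : ℕ) (v : V) : ℕ :=
  (min (G.edist x v) n).toNat

theorem coe_truncDist : (truncDist G x n v : ℕ∞) = min (G.edist x v) n :=
  ENat.natCast_toNat (by simp)

theorem truncDist_self : truncDist G x n x = 0 := by
  simp [truncDist]

theorem truncDist_le : truncDist G x n v ≤ n := by
  rw [← Nat.cast_le (α := ℕ∞), coe_truncDist]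
  exact min_le_right _ _

theorem truncDist_eq_zero (hn : n ≠ 0) : truncDist G x n v = 0 ↔ x = v := by
  rw [← Nat.cast_inj (R := ℕ∞), coe_truncDist]
  simp +contextual [min_eq_iff, hn]

theorem truncDist_of_le_dist (h : n ≤ G.dist x v) : truncDist G x n v = n := by
  rw [← Nat.cast_inj (R := ℕ∞), coe_truncDist, min_eq_right_iff]
  exact (Nat.cast_le.2 h).trans (ENat.natCast_toNat_le_self _)

theorem truncDist_le_add_one_of_adj (h : G.Adj u v) :
    truncDist G x n v ≤ truncDist G x n u + 1 := by
  rw [← Nat.cast_le (α := ℕ∞), Nat.cast_add, coe_truncDist, coe_truncDist, Nat.cast_one,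
    ← min_add_add_right]
  have : G.edist x v ≤ G.edist x u + 1 := edist_eq_one_iff_adj.2 h ▸ G.edist_triangle
  exact min_le_min this le_self_add

theorem isColayering_truncDist_compl (hn : n ≠ 0) (h : n ≤ Gᶜ.dist x y) :
    IsColayering G n (truncDist Gᶜ x n) where
  eq_of_eq_zero u v hu hv := ((truncDist_eq_zero hn).1 hu).symm.trans ((truncDist_eq_zero hn).1 hv)
  exists_eq k hk := by
    have hxy : Gᶜ.Reachable x y := .of_dist_ne_zero (by omega)
    exact exists_eq_of_le_of_le_of_reachable (fun _ _ ↦ truncDist_le_add_one_of_adj) hxy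
      (truncDist_self.trans_le k.zero_le) (hk.trans_eq (truncDist_of_le_dist h).symm)
  le _ := truncDist_le
  adj u v huv := by
    have hne : u ≠ v := by
      rintro rfl
      omega
    by_contra hadj
    have := truncDist_le_add_one_of_adj (x := x) (n := n) ((compl_adj G u v).2 ⟨hne, hadj⟩)
    omega

end TruncDist

section LayerColor

variable {V : Type*} {G : SimpleGraph V} {L : V → ℕ} {t u v : V}

open Classical in
/-- The three-coloring attached to the layers `0, …, 4` of `L` and a vertex `t` of layer `3`.
Edges between equal or consecutive layers play no role and get the default color `0`. -/
noncomputable def layerColor (L : V → ℕ) (t : V) (e : Sym2 V) : ℕ :=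
  if e.map L = s(0, 4) then 1
  else if e.map L = s(0, 3) ∨ e.map L = s(2, 4) ∨ (e.map L = s(1, 3) ∧ t ∉ e) then 2
  else 0

theorem layerColor_lt_three (e : Sym2 V) : layerColor L t e < 3 := by
  unfold layerColor
  split_ifs <;> omega

namespace IsColayering

variable (hL : IsColayering G 4 L)
include hL

theorem distProperConnected_of_eq_add_one (h : L v = L u + 1) :
    DistProperConnected G 2 (layerColor L t) u v := by
  obtain ⟨z, hz⟩ := hL.exists_eq 0 (by omega)
  obtain ⟨w, hw⟩ := hL.exists_eq 4 le_rfl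
  have hne : u ≠ v := ne_of_apply_ne L (by omega)
  have hle := hL.le v
  obtain ⟨hu, hv⟩ | ⟨hu, hv⟩ | ⟨hu, hv⟩ | ⟨hu, hv⟩ : L u = 0 ∧ L v = 1 ∨ L u = 1 ∧ L v = 2 ∨
      L u = 2 ∧ L v = 3 ∨ L u = 3 ∧ L v = 4 := by omega
  · exact .of_adj_of_adj (hL.adj (by omega) : G.Adj u w) (hL.adj (by omega) : G.Adj v w).symm hne
      (by simp [layerColor, hu, hv, hw])
  · exact .of_adj_of_adj (hL.adj (by omega) : G.Adj u w) (hL.adj (by omega) : G.Adj v w).symm hne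
      (by simp [layerColor, hu, hv, hw])
  · exact .of_adj_of_adj (hL.adj (by omega) : G.Adj z u).symm (hL.adj (by omega) : G.Adj z v) hne
      (by simp [layerColor, hu, hv, hz])
  · exact .of_adj_of_adj (hL.adj (by omega) : G.Adj z u).symm (hL.adj (by omega) : G.Adj z v) hne
      (by simp [layerColor, hu, hv, hz])

theorem distProperConnected_of_eq_one (ht : L t = 3) (hu : L u = 1) (hv : L v = 1) (huv : u ≠ v) :
    DistProperConnected G 2 (layerColor L t) u v := by
  obtain ⟨z, hz⟩ := hL.exists_eq 0 (by omega)
  obtain ⟨w, hw⟩ := hL.exists_eq 4 le_rfl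
  let p : G.Walk u v :=
    .cons (hL.adj (by omega) : G.Adj u t) <| .cons (hL.adj (by omega) : G.Adj z t).symm <|
      .cons (hL.adj (by omega) : G.Adj z w) <| .cons (hL.adj (by omega) : G.Adj v w).symm .nil
  have hpath : p.IsPath := .mk' <|
    nodup_cons_append_singleton_of_map (f := L) (l := [t, z, w]) huv (hu.trans hv.symm)
      (by simp [hv, ht, hz, hw])
  have hcolors : p.edges.map (layerColor L t) = [0, 2, 1, 0] := by
    simp [p, layerColor, hu, hv, hz, hw, ht]
  exact .of_isPath hpath hcolors (by decide)

theorem distProperConnected_of_eq_two (hu : L u = 2) (hv : L v = 2) (huv : u ≠ v) :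
    DistProperConnected G 2 (layerColor L t) u v := by
  obtain ⟨z, hz⟩ := hL.exists_eq 0 (by omega)
  obtain ⟨w, hw⟩ := hL.exists_eq 4 le_rfl
  let p : G.Walk u v :=
    .cons (hL.adj (by omega) : G.Adj z u).symm <| .cons (hL.adj (by omega) : G.Adj z w) <|
      .cons (hL.adj (by omega) : G.Adj v w).symm .nil
  have hpath : p.IsPath := .mk' <|
    nodup_cons_append_singleton_of_map (f := L) (l := [z, w]) huv (hu.trans hv.symm)
      (by simp [hv, hz, hw])
  have hcolors : p.edges.map (layerColor L t) = [0, 1, 2] := by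
    simp [p, layerColor, hu, hv, hz, hw]
  exact .of_isPath hpath hcolors (by decide)

theorem distProperConnected_of_eq_three_of_ne (ht : L t = 3) (hu : L u = 3) (hv : L v = 3)
    (huv : u ≠ v) (hvt : v ≠ t) : DistProperConnected G 2 (layerColor L t) u v := by
  obtain ⟨z, hz⟩ := hL.exists_eq 0 (by omega)
  obtain ⟨a, ha⟩ := hL.exists_eq 1 (by omega)
  obtain ⟨w, hw⟩ := hL.exists_eq 4 le_rfl
  let p : G.Walk u v :=
    .cons (hL.adj (by omega) : G.Adj z u).symm <| .cons (hL.adj (by omega) : G.Adj z w) <|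
      .cons (hL.adj (by omega) : G.Adj a w).symm <| .cons (hL.adj (by omega) : G.Adj a v) .nil
  have hpath : p.IsPath := .mk' <|
    nodup_cons_append_singleton_of_map (f := L) (l := [z, w, a]) huv (hu.trans hv.symm)
      (by simp [hv, hz, hw, ha])
  have hta : t ≠ a := ne_of_apply_ne L (by omega)
  have hcolors : p.edges.map (layerColor L t) = [2, 1, 0, 2] := by
    simp [p, layerColor, hu, hv, hz, ha, hw, hta, hvt.symm]
  exact .of_isPath hpath hcolors (by decide)

theorem distProperConnected_of_eq_three (ht : L t = 3) (hu : L u = 3) (hv : L v = 3)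
    (huv : u ≠ v) : DistProperConnected G 2 (layerColor L t) u v := by
  obtain rfl | hvt := eq_or_ne v t
  · exact (hL.distProperConnected_of_eq_three_of_ne ht hv hu huv.symm huv).symm
  · exact hL.distProperConnected_of_eq_three_of_ne ht hu hv huv hvt

theorem distProperConnected_of_eq_four (hu : L u = 4) (hv : L v = 4) (huv : u ≠ v) :
    DistProperConnected G 2 (layerColor L t) u v := by
  obtain ⟨z, hz⟩ := hL.exists_eq 0 (by omega)
  obtain ⟨b, hb⟩ := hL.exists_eq 2 (by omega)
  let p : G.Walk u v :=
    .cons (hL.adj (by omega) : G.Adj z u).symm <| .cons (hL.adj (by omega) : G.Adj z b) <|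
      .cons (hL.adj (by omega) : G.Adj b v) .nil
  have hpath : p.IsPath := .mk' <|
    nodup_cons_append_singleton_of_map (f := L) (l := [z, b]) huv (hu.trans hv.symm)
      (by simp [hv, hz, hb])
  have hcolors : p.edges.map (layerColor L t) = [1, 0, 2] := by
    simp [p, layerColor, hu, hv, hz, hb]
  exact .of_isPath hpath hcolors (by decide)

theorem distProperConnected_of_eq (ht : L t = 3) (h : L u = L v) :
    DistProperConnected G 2 (layerColor L t) u v := by
  obtain rfl | huv := eq_or_ne u v
  · exact .refl u
  have hle := hL.le v
  obtain hv | hv | hv | hv | hv : L v = 0 ∨ L v = 1 ∨ L v = 2 ∨ L v = 3 ∨ L v = 4 := by omega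
  · exact absurd (hL.eq_of_eq_zero (h.trans hv) hv) huv
  · exact hL.distProperConnected_of_eq_one ht (h.trans hv) hv huv
  · exact hL.distProperConnected_of_eq_two (h.trans hv) hv huv
  · exact hL.distProperConnected_of_eq_three ht (h.trans hv) hv huv
  · exact hL.distProperConnected_of_eq_four (h.trans hv) hv huv

theorem distProperConnected_of_le (ht : L t = 3) (h : L u ≤ L v) :
    DistProperConnected G 2 (layerColor L t) u v := by
  obtain heq | hsucc | hfar : L u = L v ∨ L v = L u + 1 ∨ L u + 2 ≤ L v := by omega
  · exact hL.distProperConnected_of_eq ht heq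
  · exact hL.distProperConnected_of_eq_add_one hsucc
  · exact .of_adj (hL.adj hfar)

theorem isPCColoring_layerColor (ht : L t = 3) : G.IsPCColoring 2 3 (layerColor L t) := by
  refine ⟨fun e _ ↦ layerColor_lt_three e, fun u v _ ↦ ?_⟩
  obtain h | h := le_total (L u) (L v)
  · exact hL.distProperConnected_of_le ht h
  · exact (hL.distProperConnected_of_le ht h).symm

end IsColayering

end LayerColor

theorem pc_le_three_of_compl_diam_ge_four_general {V : Type*} {G : SimpleGraph V} {x y : V}
    (hxy : 4 ≤ Gᶜ.dist x y) : G.Connected ∧ G.pc 2 ≤ 3 := by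
  have hL : IsColayering G 4 (truncDist Gᶜ x 4) := isColayering_truncDist_compl four_ne_zero hxy
  obtain ⟨t, ht⟩ := hL.exists_eq 3 (by omega)
  have hcolor : G.IsPCColoring 2 3 (layerColor (truncDist Gᶜ x 4) t) :=
    hL.isPCColoring_layerColor ht
  have : Nonempty V := ⟨x⟩
  exact ⟨connected_of_isPCColoring hcolor, pc_le_of_isPCColoring hcolor⟩

/-- If the complement of `G` is connected with diameter at least `4`, then `G` is
connected and `pc_{1,2}(G) ≤ 3`. -/
theorem pc_le_three_of_compl_diam_ge_four {V : Type*} [Fintype V] (G : SimpleGraph V)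
    (hc : Gᶜ.Connected) (hdiam : 4 ≤ Gᶜ.diam) :
    G.Connected ∧ G.pc 2 ≤ 3 := by
  have := hc.nonempty
  obtain ⟨x, y, hxy⟩ := Gᶜ.exists_dist_eq_diam
  exact pc_le_three_of_compl_diam_ge_four_general (hxy ▸ hdiam)
end

section
/- Let G be a connected graph whose complement Ḡ is connected, triangle-free and has diameter 2. Then pc_{1,2}(G) ≤ 3. -/
open SimpleGraph

/-!
If `G` is not complete, take a maximal clique `N` with an edge `a s` leaving it, `a ∈ N`. Color the
edges inside `N` with `0`, the other edges at `a` with `1`, and all remaining edges with `2`.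
By maximality every vertex outside `N` has a nonneighbor in `N`, and since the complement is
triangle-free, two vertices with a common nonneighbor are adjacent. Hence nonadjacent `u` and `v`
are joined, up to exchanging them, by a walk of length at most three with distinct colors:
* `u n v` with `n ∈ N`, or `u s a v` (`u s a` if `v = a`), when `u ∉ N` and `v ∈ N`;
* `u a m v` with `m ∈ N`, when `u, v ∉ N`.
-/

section RainbowConnection

variable {V α : Type*} {G : SimpleGraph V}

/-- Two vertices are rainbow joined under an edge-coloring if some walk between them has edges of
pairwise distinct colors. Walks suffice in place of paths since shortcutting only deletes edges. -/
def RainbowJoined (G : SimpleGraph V) (c : Sym2 V → α) (u v : V) : Prop :=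
  ∃ p : G.Walk u v, (p.edges.map c).Nodup

namespace RainbowJoined

variable {c : Sym2 V → α} {u v w z : V}

lemma refl (G : SimpleGraph V) (c : Sym2 V → α) (u : V) : RainbowJoined G c u u :=
  ⟨.nil, by simp⟩

lemma symm (h : RainbowJoined G c u v) : RainbowJoined G c v u := by
  obtain ⟨p, hp⟩ := h
  exact ⟨p.reverse, by simpa only [Walk.edges_reverse, List.map_reverse, List.nodup_reverse]⟩

lemma of_adj (h : G.Adj u v) : RainbowJoined G c u v :=
  ⟨.cons h .nil, by simp⟩

lemma of_mem_isClique {N : Set V} (hN : G.IsClique N) (hu : u ∈ N) (hv : v ∈ N) :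
    RainbowJoined G c u v := by
  obtain rfl | hne := eq_or_ne u v
  · exact .refl ..
  · exact .of_adj (hN hu hv hne)

lemma of_adj_of_adj (huw : G.Adj u w) (hwv : G.Adj w v) (hc : c s(u, w) ≠ c s(w, v)) :
    RainbowJoined G c u v :=
  ⟨.cons huw (.cons hwv .nil), by simpa using hc⟩

lemma of_adj_of_adj_of_adj (huw : G.Adj u w) (hwz : G.Adj w z) (hzv : G.Adj z v)
    (hc : [c s(u, w), c s(w, z), c s(z, v)].Nodup) : RainbowJoined G c u v :=
  ⟨.cons huw (.cons hwz (.cons hzv .nil)), hc⟩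

lemma exists_isPath_isDistProper {c : Sym2 V → ℕ} (h : RainbowJoined G c u v) (ℓ : ℕ) :
    ∃ p : G.Walk u v, p.IsPath ∧ p.IsDistProper ℓ c := by
  classical
  obtain ⟨p, hp⟩ := h
  have hnodup : (p.bypass.edges.map c).Nodup := hp.sublist (p.edges_bypass_sublist_edges.map c)
  refine ⟨p.bypass, p.bypass_isPath, fun i j hi hj hij _ heq ↦ hij.ne ?_⟩
  exact (hnodup.getElem_inj_iff (hi := by simpa using hi) (hj := by simpa using hj)).1 (by simpa)

end RainbowJoined

lemma pc_le_of_rainbowJoined {k : ℕ} {c : Sym2 V → ℕ} (hck : ∀ e ∈ G.edgeSet, c e < k)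
    (hc : ∀ u v, RainbowJoined G c u v) (ℓ : ℕ) : G.pc ℓ ≤ k :=
  Nat.sInf_le ⟨c, hck, fun u v _ ↦ (hc u v).exists_isPath_isDistProper ℓ⟩

lemma exists_maximal_isClique_superset {s : Set V} (hs : G.IsClique s) :
    ∃ N, s ⊆ N ∧ Maximal G.IsClique N :=
  zorn_subset_nonempty {t | G.IsClique t}
    (fun S hS hchain _ ↦ ⟨⋃₀ S, (isClique_sUnion hchain.directedOn).2 hS,
      fun _ ↦ Set.subset_sUnion_of_mem⟩) s hs

lemma exists_not_adj_of_maximal_isClique {N : Set V} (hN : Maximal G.IsClique N) {u : V}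
    (hu : u ∉ N) : ∃ n ∈ N, ¬G.Adj u n := by
  by_contra! hadj
  exact hu <| hN.mem_of_prop_insert <| hN.prop.insert fun n hn _ ↦ hadj n hn

lemma adj_of_not_adj_of_not_adj (htf : Gᶜ.CliqueFree 3) {u v w : V} (huv : u ≠ v) (huw : u ≠ w)
    (hvw : v ≠ w) (hnuw : ¬G.Adj u w) (hnvw : ¬G.Adj v w) : G.Adj u v := by
  classical
  by_contra hnuv
  exact htf {u, v, w} <| is3Clique_triple_iff.2
    ⟨(compl_adj ..).2 ⟨huv, hnuv⟩, (compl_adj ..).2 ⟨huw, hnuw⟩, (compl_adj ..).2 ⟨hvw, hnvw⟩⟩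

open Classical in
/-- The 3-coloring attached to a vertex set `N` (a maximal clique below) and a vertex `a` of `N`:
`0` inside `N`, `1` on the remaining edges at `a`, and `2` elsewhere. -/
noncomputable def cliqueColoring (N : Set V) (a : V) (e : Sym2 V) : ℕ :=
  if ∀ u ∈ e, u ∈ N then 0 else if a ∈ e then 1 else 2

section cliqueColoring

variable {N : Set V} {a s u v : V}

lemma cliqueColoring_lt_three (N : Set V) (a : V) (e : Sym2 V) : cliqueColoring N a e < 3 := by
  unfold cliqueColoring
  split_ifs <;> decide

lemma cliqueColoring_of_mem (hu : u ∈ N) (hv : v ∈ N) : cliqueColoring N a s(u, v) = 0 := by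
  simp [cliqueColoring, hu, hv]

lemma cliqueColoring_left_of_notMem (hu : u ∉ N) : cliqueColoring N a s(u, a) = 1 := by
  simp [cliqueColoring, hu]

lemma cliqueColoring_of_ne (hu : u ∉ N) (hua : u ≠ a) (hva : v ≠ a) :
    cliqueColoring N a s(u, v) = 2 := by
  simp [cliqueColoring, hu, hua.symm, hva.symm]

lemma cliqueColoring_ne_zero (hu : u ∉ N) : cliqueColoring N a s(u, v) ≠ 0 := by
  unfold cliqueColoring
  split_ifs <;> simp_all

lemma rainbowJoined_of_notMem_of_mem (htf : Gᶜ.CliqueFree 3) (hN : Maximal G.IsClique N)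
    (ha : a ∈ N) (hs : s ∉ N) (has : G.Adj a s) (hu : u ∉ N) (hv : v ∈ N) :
    RainbowJoined G (cliqueColoring N a) u v := by
  by_cases hnbr : ∃ n ∈ N, G.Adj u n
  · obtain ⟨n, hn, hun⟩ := hnbr
    obtain rfl | hnv := eq_or_ne n v
    · exact .of_adj hun
    · refine .of_adj_of_adj hun (hN.prop hn hv hnv) ?_
      rw [cliqueColoring_of_mem hn hv]
      exact cliqueColoring_ne_zero hu
  · push Not at hnbr
    have hus : G.Adj u s := by
      obtain ⟨n, hn, hsn⟩ := exists_not_adj_of_maximal_isClique hN hs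
      have hne : u ≠ s := by
        rintro rfl
        exact hnbr a ha has.symm
      exact adj_of_not_adj_of_not_adj htf hne (ne_of_mem_of_not_mem hn hu).symm
        (ne_of_mem_of_not_mem hn hs).symm (hnbr n hn) hsn
    have hcolor_us : cliqueColoring N a s(u, s) = 2 :=
      cliqueColoring_of_ne hu (ne_of_mem_of_not_mem ha hu).symm has.ne'
    have hcolor_sa : cliqueColoring N a s(s, a) = 1 := cliqueColoring_left_of_notMem hs
    obtain rfl | hav := eq_or_ne a v
    · exact .of_adj_of_adj hus has.symm (by simp [hcolor_us, hcolor_sa])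
    · exact .of_adj_of_adj_of_adj hus has.symm (hN.prop ha hv hav)
        (by simp [hcolor_us, hcolor_sa, cliqueColoring_of_mem ha hv])

lemma rainbowJoined_of_notMem_of_adj (htf : Gᶜ.CliqueFree 3) (hN : Maximal G.IsClique N)
    (ha : a ∈ N) (hu : u ∉ N) (hv : v ∉ N) (hne : u ≠ v) (hua : G.Adj u a) :
    RainbowJoined G (cliqueColoring N a) u v := by
  by_cases huv : G.Adj u v
  · exact .of_adj huv
  obtain ⟨m, hm, hum⟩ := exists_not_adj_of_maximal_isClique hN hu
  have ham : a ≠ m := by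
    rintro rfl
    exact hum hua
  have hmv : G.Adj m v :=
    adj_of_not_adj_of_not_adj htf (ne_of_mem_of_not_mem hm hv) (ne_of_mem_of_not_mem hm hu) hne.symm
      (fun h ↦ hum h.symm) (fun h ↦ huv h.symm)
  have hcolor_mv : cliqueColoring N a s(m, v) = 2 := by
    rw [Sym2.eq_swap]
    exact cliqueColoring_of_ne hv (ne_of_mem_of_not_mem ha hv).symm ham.symm
  exact .of_adj_of_adj_of_adj hua (hN.prop ha hm ham) hmv
    (by simp [cliqueColoring_left_of_notMem hu, cliqueColoring_of_mem ha hm, hcolor_mv])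

lemma rainbowJoined_of_notMem_of_notMem (htf : Gᶜ.CliqueFree 3) (hN : Maximal G.IsClique N)
    (ha : a ∈ N) (hu : u ∉ N) (hv : v ∉ N) : RainbowJoined G (cliqueColoring N a) u v := by
  obtain rfl | hne := eq_or_ne u v
  · exact .refl ..
  by_cases hua : G.Adj u a
  · exact rainbowJoined_of_notMem_of_adj htf hN ha hu hv hne hua
  by_cases hva : G.Adj v a
  · exact (rainbowJoined_of_notMem_of_adj htf hN ha hv hu hne.symm hva).symm
  · exact .of_adj <| adj_of_not_adj_of_not_adj htf hne (ne_of_mem_of_not_mem ha hu).symm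
      (ne_of_mem_of_not_mem ha hv).symm hua hva

lemma rainbowJoined_cliqueColoring (htf : Gᶜ.CliqueFree 3) (hN : Maximal G.IsClique N)
    (ha : a ∈ N) (hs : s ∉ N) (has : G.Adj a s) (u v : V) :
    RainbowJoined G (cliqueColoring N a) u v := by
  by_cases hu : u ∈ N <;> by_cases hv : v ∈ N
  · exact .of_mem_isClique hN.prop hu hv
  · exact (rainbowJoined_of_notMem_of_mem htf hN ha hs has hv hu).symm
  · exact rainbowJoined_of_notMem_of_mem htf hN ha hs has hu hv
  · exact rainbowJoined_of_notMem_of_notMem htf hN ha hu hv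

end cliqueColoring

theorem pc_le_three_of_compl_triangleFree_diam_two_general (hG : G.Preconnected)
    (htf : Gᶜ.CliqueFree 3) (ℓ : ℕ) : G.pc ℓ ≤ 3 := by
  obtain rfl | hG_ne_top := eq_or_ne G ⊤
  · exact pc_le_of_rainbowJoined (c := fun _ ↦ 0) (fun _ _ ↦ by decide)
      (fun u v ↦ .of_mem_isClique (N := Set.univ) (fun _ _ _ _ hne ↦ hne) trivial trivial) ℓ
  · obtain ⟨u, v, hne, huv⟩ := ne_top_iff_exists_not_adj.1 hG_ne_top
    obtain ⟨N, huN, hN⟩ := exists_maximal_isClique_superset (G.isClique_singleton u)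
    have hu : u ∈ N := huN rfl
    have hv : v ∉ N := fun hv ↦ huv (hN.prop hu hv hne)
    obtain ⟨p⟩ := hG u v
    obtain ⟨d, -, ha, hs⟩ := p.exists_boundary_dart N hu hv
    exact pc_le_of_rainbowJoined (fun e _ ↦ cliqueColoring_lt_three N d.fst e)
      (rainbowJoined_cliqueColoring htf hN ha hs d.adj) ℓ

end RainbowConnection

/-- If `G` is connected and its complement is connected, triangle-free and has
diameter `2`, then `pc_{1,2}(G) ≤ 3`. -/
theorem pc_le_three_of_compl_triangleFree_diam_two {V : Type*} [Fintype V]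
    (G : SimpleGraph V) (hG : G.Connected) (hc : Gᶜ.Connected)
    (htf : Gᶜ.CliqueFree 3) (hdiam : Gᶜ.diam = 2) :
    G.pc 2 ≤ 3 :=
  pc_le_three_of_compl_triangleFree_diam_two_general hG.preconnected htf 2
end

section
/- Let G be a nontrivial connected graph on n ≥ 2 vertices. Then pc_{1,2}(G) = n − 1 if and only if G is isomorphic to the star S_n (n ≥ 2) or to a double star T(n₁,n₂) for some n₁, n₂ ≥ 1. -/
open SimpleGraph

/-- The star on `n` vertices: vertex `0` is adjacent to all other vertices. -/
def starGraph (n : ℕ) : SimpleGraph (Fin n) :=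
  SimpleGraph.fromRel (fun a _ => a.val = 0)

/-- The double star `T(n₁, n₂)`: two adjacent centers, the first with `n₁` pendant
leaves and the second with `n₂` pendant leaves. -/
def doubleStar (n₁ n₂ : ℕ) : SimpleGraph (Fin 2 ⊕ (Fin n₁ ⊕ Fin n₂)) :=
  SimpleGraph.fromRel (fun a b =>
    (a = Sum.inl 0 ∧ b = Sum.inl 1) ∨
    (a = Sum.inl 0 ∧ ∃ i : Fin n₁, b = Sum.inr (Sum.inl i)) ∨
    (a = Sum.inl 1 ∧ ∃ j : Fin n₂, b = Sum.inr (Sum.inr j)))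

/-!
Extending a coloring by one vertex costs at most one new color: give that color to all edges at the
new vertex, and attach the vertex to a proper path that starts at one of its neighbors. Starting
from a single vertex this gives `pc G ℓ ≤ n - 1`; starting from a subgraph on `m` vertices that can
be colored with `m - 2` colors it gives `pc G ℓ ≤ n - 2`. A cycle is such a subgraph (a triangle
needs one color, and in a longer cycle two colors can be repeated), and so is a path with `ℓ + 2`
edges, colored periodically. Conversely, any two edges of a tree lie on a common path, so if all
paths have at most `ℓ + 1` edges, then all edges must receive different colors. Hence
`pc G ℓ = n - 1` exactly for the trees without paths of length `ℓ + 2`; for `ℓ = 2` these are the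
stars and the double stars.
-/

section Walks

variable {V : Type*} {G : SimpleGraph V} {ℓ : ℕ} {c c' : Sym2 V → ℕ}

theorem isDistProper_reverse {u v : V} {p : G.Walk u v} (hp : p.IsDistProper ℓ c) :
    p.reverse.IsDistProper ℓ c := by
  intro i j hi hj hij hjℓ
  simp only [Walk.edges_reverse, List.length_reverse] at hi hj
  simp only [Walk.edges_reverse, List.getElem_reverse]
  exact (hp _ _ (by lia) (by lia) (by lia) (by lia)).symm

theorem isDistProper_cons {u v w : V} {h : G.Adj u v} {p : G.Walk v w}
    (hp : p.IsDistProper ℓ c) (hc : ∀ e ∈ p.edges.take ℓ, c s(u, v) ≠ c e) :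
    (Walk.cons h p).IsDistProper ℓ c := by
  intro i j hi hj hij hjℓ
  simp only [Walk.edges_cons, List.length_cons] at hi hj
  obtain ⟨j, rfl⟩ : ∃ j', j = j' + 1 := ⟨j - 1, by lia⟩
  cases i with
  | zero => exact hc _ (List.mem_take_iff_getElem.2 ⟨j, by lia, rfl⟩)
  | succ i => exact hp i j (by lia) (by lia) (by lia) (by lia)

theorem isDistProper_congr {u v : V} {p : G.Walk u v} (h : ∀ e ∈ p.edges, c e = c' e)
    (hp : p.IsDistProper ℓ c) : p.IsDistProper ℓ c' := by
  intro i j hi hj hij hjℓ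
  rw [← h _ (List.getElem_mem hi), ← h _ (List.getElem_mem hj)]
  exact hp i j hi hj hij hjℓ

theorem isDistProper_of_isSubwalk {u v u' v' : V} {p : G.Walk u v} {q : G.Walk u' v'}
    (hqp : q.IsSubwalk p) (hp : p.IsDistProper ℓ c) : q.IsDistProper ℓ c := by
  obtain ⟨s, t, hst⟩ := hqp.edges_isInfix
  intro i j hi hj hij hjℓ
  have hlen := congrArg List.length hst
  simp only [List.length_append] at hlen
  have hget : ∀ (k : ℕ) (hk : k < q.edges.length), p.edges[s.length + k] = q.edges[k] := by
    intro k hk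
    simp only [← hst]
    grind
  rw [← hget i hi, ← hget j hj]
  exact hp _ _ _ _ (by lia) (by lia)

theorem isDistProper_of_injOn {u v : V} {p : G.Walk u v} (hp : p.IsTrail)
    (hc : Set.InjOn c {e | e ∈ p.edges}) : p.IsDistProper ℓ c := by
  intro i j hi hj hij _ h
  exact hij.ne (hp.edges_nodup.getElem_inj_iff.1
    (hc (List.getElem_mem hi) (List.getElem_mem hj) h))

end Walks

/-- `ProperlyJoinedIn G ℓ c S u v`: the vertices `u` and `v` are joined by a distance `ℓ`-proper
path of `G` that stays inside the vertex set `S`. -/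
def ProperlyJoinedIn {V : Type*} (G : SimpleGraph V) (ℓ : ℕ) (c : Sym2 V → ℕ) (S : Finset V)
    (u v : V) : Prop :=
  ∃ p : G.Walk u v, p.IsPath ∧ p.IsDistProper ℓ c ∧ ∀ w ∈ p.support, w ∈ S

namespace ProperlyJoinedIn

variable {V : Type*} {G : SimpleGraph V} {ℓ : ℕ} {c c' : Sym2 V → ℕ} {S T : Finset V} {u v : V}

instance : Std.Symm (ProperlyJoinedIn G ℓ c S) where
  symm _ _ := fun ⟨p, hp, hd, hs⟩ ↦
    ⟨p.reverse, hp.reverse, isDistProper_reverse hd, by simpa using hs⟩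

theorem refl (hu : u ∈ S) : ProperlyJoinedIn G ℓ c S u u :=
  ⟨Walk.nil, Walk.IsPath.nil, fun i j hi ↦ by simp at hi, by simpa using hu⟩

theorem of_walk_injOn (p : G.Walk u v) (hc : Set.InjOn c {e | e ∈ p.edges})
    (hS : ∀ w ∈ p.support, w ∈ S) : ProperlyJoinedIn G ℓ c S u v := by
  classical
  exact ⟨p.bypass, p.bypass_isPath,
    isDistProper_of_injOn p.bypass_isPath.isTrail
      (hc.mono fun _ h ↦ p.edges_bypass_subset_edges h),
    fun w hw ↦ hS w (p.support_bypass_subset_support hw)⟩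

theorem mono (hST : S ⊆ T) (hc : ∀ e : Sym2 V, (∀ v ∈ e, v ∈ S) → c e = c' e)
    (h : ProperlyJoinedIn G ℓ c S u v) : ProperlyJoinedIn G ℓ c' T u v := by
  obtain ⟨p, hp, hd, hS⟩ := h
  refine ⟨p, hp, isDistProper_congr (fun e he ↦ hc e fun v hv ↦ hS v ?_) hd,
    fun w hw ↦ hST (hS w hw)⟩
  exact p.mem_support_of_mem_edges he hv

theorem cons [DecidableEq V] {w : V} (hw : w ∉ S) (hwu : G.Adj w u)
    (hc : ∀ e ∈ G.edgeSet, (∀ x ∈ e, x ∈ S) → c s(w, u) ≠ c e)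
    (h : ProperlyJoinedIn G ℓ c S u v) : ProperlyJoinedIn G ℓ c (insert w S) w v := by
  obtain ⟨p, hp, hd, hS⟩ := h
  refine ⟨.cons hwu p, hp.cons fun hwp ↦ hw (hS w hwp), isDistProper_cons hd fun e he ↦ ?_, ?_⟩
  · have he' := List.mem_of_mem_take he
    exact hc e (p.edges_subset_edgeSet he') fun x hx ↦ hS x (p.mem_support_of_mem_edges he' hx)
  · simpa using fun x hx ↦ Or.inr (hS x hx)

end ProperlyJoinedIn

/-- `IsPCColoringOn G ℓ k S c` is the version of `G.IsPCColoring ℓ k c` for a vertex set `S`: the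
edges inside `S` have colors below `k`, and any two vertices of `S` are joined by a distance
`ℓ`-proper path inside `S`. Colorings are built up by enlarging `S`. -/
def IsPCColoringOn {V : Type*} (G : SimpleGraph V) (ℓ k : ℕ) (S : Finset V)
    (c : Sym2 V → ℕ) : Prop :=
  (∀ e ∈ G.edgeSet, (∀ v ∈ e, v ∈ S) → c e < k) ∧
    (S : Set V).Pairwise (ProperlyJoinedIn G ℓ c S)

namespace IsPCColoringOn

variable {V : Type*} {G : SimpleGraph V} {ℓ k : ℕ} {S : Finset V} {c : Sym2 V → ℕ}

theorem singleton (G : SimpleGraph V) (ℓ : ℕ) (v : V) (c : Sym2 V → ℕ) :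
    IsPCColoringOn G ℓ 0 {v} c := by
  refine ⟨fun e he hv ↦ ?_, by simp⟩
  induction e with | h a b =>
  obtain ⟨rfl, rfl⟩ : a = v ∧ b = v := by simpa using hv
  exact absurd rfl (G.ne_of_adj he)

theorem of_isClique (hS : G.IsClique S) : IsPCColoringOn G ℓ 1 S (fun _ ↦ 0) := by
  refine ⟨by simp, fun u hu v hv huv ↦ .of_walk_injOn (hS hu hv huv).toWalk ?_ ?_⟩
  · simp
  · simpa using ⟨hu, hv⟩

theorem isPCColoring [Fintype V] (h : IsPCColoringOn G ℓ k Finset.univ c) :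
    G.IsPCColoring ℓ k c := by
  refine ⟨fun e he ↦ h.1 e he fun v _ ↦ Finset.mem_univ v, fun u v huv ↦ ?_⟩
  obtain ⟨p, hp, hd, -⟩ := h.2 (by simp) (by simp) huv
  exact ⟨p, hp, hd⟩

theorem insert [DecidableEq V] {w s : V} (h : IsPCColoringOn G ℓ k S c) (hw : w ∉ S)
    (hs : s ∈ S) (hws : G.Adj w s) :
    IsPCColoringOn G ℓ (k + 1) (insert w S) (fun e ↦ if w ∈ e then k else c e) := by
  set c' : Sym2 V → ℕ := fun e ↦ if w ∈ e then k else c e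
  have hagree : ∀ e : Sym2 V, (∀ v ∈ e, v ∈ S) → c e = c' e := fun e he ↦
    (if_neg fun hwe ↦ hw (he w hwe)).symm
  have hold : ∀ u ∈ S, ∀ v ∈ S, ProperlyJoinedIn G ℓ c' S u v := by
    intro u hu v hv
    rcases eq_or_ne u v with rfl | huv
    · exact .refl hu
    · exact (h.2 hu hv huv).mono Finset.Subset.rfl hagree
  refine ⟨fun e he heS ↦ ?_, ?_⟩
  · by_cases hwe : w ∈ e
    · simp [c', hwe]
    · have := h.1 e he fun v hv ↦
        (Finset.mem_insert.1 (heS v hv)).resolve_left fun hvw ↦ hwe (hvw ▸ hv)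
      simpa [c', hwe] using this.trans k.lt_succ_self
  · rw [Finset.coe_insert, Set.pairwise_insert_of_symm]
    refine ⟨fun u hu v hv _ ↦ (hold u hu v hv).mono (Finset.subset_insert w S) fun _ _ ↦ rfl,
      fun v hv _ ↦ (hold s hs v hv).cons hw hws fun e he heS ↦ ?_⟩
    have := h.1 e he heS
    rw [← hagree e heS]
    simpa [c'] using this.ne'

end IsPCColoringOn

section UpperBounds

variable {V : Type*} {G : SimpleGraph V} {ℓ k : ℕ} {S : Finset V} {c : Sym2 V → ℕ}

theorem exists_adj_mem_notMem (hG : G.Preconnected) {A : Set V} (hA : A.Nonempty)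
    (hA' : Aᶜ.Nonempty) : ∃ u ∈ A, ∃ v ∉ A, G.Adj u v := by
  obtain ⟨a, ha⟩ := hA
  obtain ⟨b, hb⟩ := hA'
  obtain ⟨p⟩ := hG a b
  obtain ⟨d, -, hd, hd'⟩ := p.exists_boundary_dart A ha hb
  exact ⟨d.fst, hd, d.snd, hd', d.adj⟩

theorem exists_isPCColoring_of_isPCColoringOn [Fintype V] [DecidableEq V] (hG : G.Connected)
    (hS : S.Nonempty) (h : IsPCColoringOn G ℓ k S c) :
    ∃ c', G.IsPCColoring ℓ (k + Sᶜ.card) c' := by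
  induction hm : Sᶜ.card generalizing S k c with
  | zero =>
    obtain rfl : S = Finset.univ := by simpa using hm
    exact ⟨c, h.isPCColoring⟩
  | succ m ih =>
    have hS' : ((S : Set V)ᶜ).Nonempty := by
      rw [← Finset.coe_compl, Finset.coe_nonempty, ← Finset.card_pos]
      lia
    obtain ⟨s, hs, w, hw, hsw⟩ := exists_adj_mem_notMem hG.preconnected hS hS'
    rw [Finset.mem_coe] at hw
    rw [← Nat.add_assoc, Nat.add_right_comm]
    refine ih (S.insert_nonempty w) (h.insert hw hs hsw.symm) ?_
    rw [Finset.compl_insert, Finset.card_erase_of_mem (by simpa using hw), hm, Nat.add_sub_cancel]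

theorem pc_add_card_le [Fintype V] (hG : G.Connected) (hS : S.Nonempty)
    (h : IsPCColoringOn G ℓ k S c) : G.pc ℓ + S.card ≤ k + Fintype.card V := by
  classical
  have hle : G.pc ℓ ≤ k + Sᶜ.card :=
    Nat.sInf_le (exists_isPCColoring_of_isPCColoringOn hG hS h)
  have := S.card_add_card_compl
  lia

theorem exists_isPCColoring_pc [Finite V] (hG : G.Connected) (ℓ : ℕ) :
    ∃ c, G.IsPCColoring ℓ (G.pc ℓ) c := by
  classical
  cases nonempty_fintype V
  obtain ⟨v⟩ := hG.nonempty
  have h := exists_isPCColoring_of_isPCColoringOn hG (Finset.singleton_nonempty v)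
    (.singleton G ℓ v fun _ ↦ 0)
  exact Nat.sInf_mem (s := {k | ∃ c, G.IsPCColoring ℓ k c}) ⟨_, h⟩

theorem pc_lt_card [Fintype V] (hG : G.Connected) (ℓ : ℕ) : G.pc ℓ < Fintype.card V := by
  obtain ⟨v⟩ := hG.nonempty
  simpa using pc_add_card_le hG (Finset.singleton_nonempty v) (.singleton G ℓ v fun _ ↦ 0)

end UpperBounds

section WalkColorings

variable {V : Type*} {G : SimpleGraph V} {ℓ t : ℕ}

theorem exists_isSubwalk_getVert {u v : V} (p : G.Walk u v) {i j : ℕ} (hij : i ≤ j) :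
    ∃ q : G.Walk (p.getVert i) (p.getVert j), q.IsSubwalk p ∧ q.edges = (p.edges.take j).drop i :=
  ⟨((p.take j).drop i).copy (by rw [Walk.take_getVert, min_eq_right hij]) rfl, by
    simpa only [Walk.copy_rfl_rfl] using
      (((p.take j).isSubwalk_drop i).trans (p.isSubwalk_take j)).copy _ rfl rfl rfl, by
    simp [Walk.edges_drop, Walk.edges_take]⟩

theorem pairwise_mem_support {u v : V} (p : G.Walk u v) {r : V → V → Prop} [Std.Symm r]
    (h : ∀ i j, i < j → j ≤ p.length → r (p.getVert i) (p.getVert j)) :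
    {w | w ∈ p.support}.Pairwise r := by
  intro x hx y hy hxy
  obtain ⟨i, rfl, hi⟩ := Walk.mem_support_iff_exists_getVert.1 hx
  obtain ⟨j, rfl, hj⟩ := Walk.mem_support_iff_exists_getVert.1 hy
  rcases lt_trichotomy i j with hij | rfl | hji
  · exact h i j hij hj
  · exact absurd rfl hxy
  · exact Std.Symm.symm _ _ (h j i hji hi)

/-- The coloring of the edges of a walk that cycles through the colors `0, …, t - 1` along the
walk. -/
def periodicColoring [DecidableEq V] {u v : V} (p : G.Walk u v) (t : ℕ) (e : Sym2 V) : ℕ :=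
  p.edges.idxOf e % t

theorem isDistProper_periodicColoring [DecidableEq V] {u v : V} {p : G.Walk u v} (hp : p.IsTrail)
    (ht : ℓ < t) : p.IsDistProper ℓ (periodicColoring p t) := by
  intro i j hi hj hij hjℓ hcol
  simp only [periodicColoring, hp.edges_nodup.idxOf_getElem] at hcol
  have := Nat.le_of_dvd (by lia) ((Nat.modEq_iff_dvd' hij.le).1 hcol)
  lia

theorem eq_add_of_mod_eq_mod {a b : ℕ} (hab : a < b) (hb : b < 2 * t) (h : a % t = b % t) :
    b = a + t := by
  obtain ⟨q, hq⟩ := (Nat.modEq_iff_dvd' hab.le).1 h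
  have : q < 2 := by
    by_contra! hq2
    have := Nat.mul_le_mul_left t hq2
    lia
  interval_cases q <;> lia

theorem injOn_periodicColoring [DecidableEq V] {u v : V} {p : G.Walk u v}
    (hp : p.length ≤ 2 * t) {I : Set ℕ} (hI : ∀ a ∈ I, a + t ∉ I) :
    Set.InjOn (periodicColoring p t) {e | e ∈ p.edges ∧ p.edges.idxOf e ∈ I} := by
  rintro e ⟨he, heI⟩ f ⟨hf, hfI⟩ hef
  have hlt : ∀ {e}, e ∈ p.edges → p.edges.idxOf e < 2 * t := fun he ↦
    (List.idxOf_lt_length_of_mem he).trans_le (by simpa using hp)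
  rcases lt_trichotomy (p.edges.idxOf e) (p.edges.idxOf f) with h | h | h
  · exact absurd hfI (eq_add_of_mod_eq_mod h (hlt hf) hef ▸ hI _ heI)
  · exact (List.idxOf_inj he).1 h
  · exact absurd heI (eq_add_of_mod_eq_mod h (hlt he) hef.symm ▸ hI _ hfI)

theorem IsPCColoringOn.of_isPath [DecidableEq V] {u v : V} {p : G.Walk u v} (hp : p.IsPath) :
    IsPCColoringOn G ℓ (ℓ + 1) p.support.toFinset (periodicColoring p (ℓ + 1)) := by
  refine ⟨fun e _ _ ↦ Nat.mod_lt _ ℓ.succ_pos, ?_⟩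
  rw [List.coe_toFinset]
  refine pairwise_mem_support p fun i j hij _ ↦ ?_
  obtain ⟨q, hq, -⟩ := exists_isSubwalk_getVert p hij.le
  exact ⟨q, Walk.isPath_of_isSubwalk hq hp,
    isDistProper_of_isSubwalk hq (isDistProper_periodicColoring hp.isTrail ℓ.lt_succ_self),
    fun w hw ↦ List.mem_toFinset.2 (hq.support_subset hw)⟩

theorem le_idxOf_of_mem_drop {α : Type*} [DecidableEq α] {l : List α} (hl : l.Nodup) {n : ℕ}
    {a : α} (ha : a ∈ l.drop n) : n ≤ l.idxOf a := by
  by_contra! h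
  exact List.disjoint_take_drop hl le_rfl
    ((List.mem_take_iff_idxOf_lt (List.mem_of_mem_drop ha)).2 h) ha

theorem IsPCColoringOn.of_isCircuit [DecidableEq V] {u : V} {p : G.Walk u u} (hp : p.IsCircuit)
    (hpt : p.length ≤ 2 * t) :
    IsPCColoringOn G ℓ t p.support.toFinset (periodicColoring p t) := by
  have ht : 0 < t := by
    have := hp.three_le_length
    lia
  refine ⟨fun e _ _ ↦ Nat.mod_lt _ ht, ?_⟩
  rw [List.coe_toFinset]
  refine pairwise_mem_support p fun i j hij hj ↦ ?_
  -- If the arc from `i` to `j` has more than `t` edges, the complementary one has fewer than `t`.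
  by_cases hijt : j ≤ i + t
  · obtain ⟨q, hq, hqe⟩ := exists_isSubwalk_getVert p hij.le
    refine .of_walk_injOn q ((injOn_periodicColoring hpt (I := Set.Ico i j) ?_).mono ?_)
      fun w hw ↦ List.mem_toFinset.2 (hq.support_subset hw)
    · simp only [Set.mem_Ico]
      lia
    · intro e (he : e ∈ q.edges)
      rw [hqe] at he
      have hej := List.mem_of_mem_drop he
      rw [List.drop_take] at he
      have hep := List.mem_of_mem_take hej
      exact ⟨hep, le_idxOf_of_mem_drop hp.isTrail.edges_nodup (List.mem_of_mem_take he),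
        (List.mem_take_iff_idxOf_lt hep).1 hej⟩
  · refine symm (.of_walk_injOn ((p.drop j).append (p.take i))
      ((injOn_periodicColoring hpt (I := {a | a < i ∨ j ≤ a ∧ a < p.length}) ?_).mono ?_) ?_)
    · simp only [Set.mem_ofPred_eq]
      lia
    · intro e he
      simp only [Set.mem_ofPred_eq, Walk.edges_append, Walk.edges_drop, Walk.edges_take,
        List.mem_append] at he
      rcases he with he | he
      · have hep := List.mem_of_mem_drop he
        exact ⟨hep, .inr ⟨le_idxOf_of_mem_drop hp.isTrail.edges_nodup he,
          by simpa using List.idxOf_lt_length_of_mem hep⟩⟩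
      · have hep := List.mem_of_mem_take he
        exact ⟨hep, .inl ((List.mem_take_iff_idxOf_lt hep).1 he)⟩
    · intro w hw
      rcases (Walk.mem_support_append_iff _ _).1 hw with hw | hw
      · exact List.mem_toFinset.2 ((p.isSubwalk_drop j).support_subset hw)
      · exact List.mem_toFinset.2 ((p.isSubwalk_take i).support_subset hw)

theorem card_toFinset_support_of_isCycle [DecidableEq V] {u : V} {p : G.Walk u u}
    (hp : p.IsCycle) : p.support.toFinset.card = p.length := by
  have hu : u ∈ p.tail.support.toFinset := by simp
  rw [← p.cons_support_tail hp.not_nil, List.toFinset_cons, Finset.insert_eq_of_mem hu,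
    List.toFinset_card_of_nodup hp.isPath_tail.support_nodup, Walk.length_support,
    Walk.length_tail_add_one hp.not_nil]

theorem pc_add_length_le_of_isPath [Fintype V] {u v : V} {p : G.Walk u v} (hG : G.Connected)
    (hp : p.IsPath) (ℓ : ℕ) : G.pc ℓ + p.length ≤ ℓ + Fintype.card V := by
  classical
  have := pc_add_card_le hG (by simp) (IsPCColoringOn.of_isPath (ℓ := ℓ) hp)
  rw [List.toFinset_card_of_nodup hp.support_nodup, Walk.length_support] at this
  lia

theorem pc_add_length_le_of_isCycle [Fintype V] {u : V} {p : G.Walk u u} (hG : G.Connected)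
    (hp : p.IsCycle) (hpt : p.length ≤ 2 * t) : G.pc ℓ + p.length ≤ t + Fintype.card V := by
  classical
  have := pc_add_card_le hG (by simp) (IsPCColoringOn.of_isCircuit (ℓ := ℓ) hp.isCircuit hpt)
  rwa [card_toFinset_support_of_isCycle hp] at this

theorem pc_add_two_le_of_not_isAcyclic [Fintype V] (hG : G.Connected) (hG' : ¬ G.IsAcyclic)
    (ℓ : ℕ) : G.pc ℓ + 2 ≤ Fintype.card V := by
  simp only [IsAcyclic, not_forall, not_not] at hG'
  obtain ⟨u, p, hp⟩ := hG'
  rcases hp.three_le_length.eq_or_lt' with h | h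
  · obtain ⟨S, hS⟩ := is3Clique_iff_exists_cycle_length_three.2 ⟨u, p, hp, h⟩
    have := pc_add_card_le hG (Finset.card_pos.1 (by simp [hS.card_eq]))
      (IsPCColoringOn.of_isClique (ℓ := ℓ) hS.isClique)
    rw [hS.card_eq] at this
    lia
  · have := pc_add_length_le_of_isCycle (ℓ := ℓ) (t := p.length - 2) hG hp (by lia)
    lia

end WalkColorings

section Trees

variable {V : Type*} {G : SimpleGraph V} {ℓ k : ℕ} {c : Sym2 V → ℕ}

theorem injOn_edges_of_isDistProper {u v : V} {p : G.Walk u v} (hp : p.IsDistProper ℓ c)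
    (hpℓ : p.length ≤ ℓ + 1) : Set.InjOn c {e | e ∈ p.edges} := by
  intro e he f hf hef
  obtain ⟨i, hi, rfl⟩ := List.getElem_of_mem he
  obtain ⟨j, hj, rfl⟩ := List.getElem_of_mem hf
  have hlen := p.length_edges
  rcases lt_trichotomy i j with hij | rfl | hji
  · exact absurd hef (hp i j hi hj hij (by lia))
  · rfl
  · exact absurd hef.symm (hp j i hj hi hji (by lia))

theorem exists_mem_forall_walk_mem_edges {e : Sym2 V} (he : G.IsBridge e) (w : V) :
    ∃ a ∈ e, ∀ p : G.Walk a w, e ∈ p.edges := by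
  induction e with | h x y =>
  by_contra! h
  obtain ⟨p, hp⟩ := h x (Sym2.mem_mk_left x y)
  obtain ⟨q, hq⟩ := h y (Sym2.mem_mk_right x y)
  have := isBridge_iff_forall_walk_mem_edges.1 he (p.append q.reverse)
  simp [hp, hq] at this

theorem exists_forall_walk_mem_edges_and_mem_edges (hG : G.IsAcyclic) {e f : Sym2 V}
    (he : e ∈ G.edgeSet) (hf : f ∈ G.edgeSet) (hef : e ≠ f) :
    ∃ u v, ∀ p : G.Walk u v, e ∈ p.edges ∧ f ∈ p.edges := by
  induction f with | h x y =>
  have hbridge := isAcyclic_iff_forall_isBridge.1 hG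
  obtain ⟨a, -, ha⟩ := exists_mem_forall_walk_mem_edges (hbridge he) x
  obtain ⟨b, hb, hb'⟩ := exists_mem_forall_walk_mem_edges (hbridge hf) a
  refine ⟨b, a, fun p ↦ ⟨?_, hb' p⟩⟩
  rcases Sym2.mem_iff.1 hb with rfl | rfl
  · simpa using ha p.reverse
  · rw [Sym2.eq_swap] at hef
    simpa [hef] using ha (p.reverse.concat (G.adj_symm hf))

theorem injOn_edgeSet_of_isPCColoring (hc : G.IsPCColoring ℓ k c) (hG : G.IsAcyclic)
    (hℓ : ∀ u v (p : G.Walk u v), p.IsPath → p.length ≤ ℓ + 1) : Set.InjOn c G.edgeSet := by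
  intro e he f hf hcol
  by_contra hef
  obtain ⟨u, v, huv⟩ := exists_forall_walk_mem_edges_and_mem_edges hG he hf hef
  have hne : u ≠ v := by
    rintro rfl
    simpa using huv .nil
  obtain ⟨p, hp, hpc⟩ := hc.2 u v hne
  exact hef (injOn_edges_of_isDistProper hpc (hℓ u v p hp) (huv p).1 (huv p).2 hcol)

theorem card_le_pc_add_one [Fintype V] (hG : G.IsTree)
    (hℓ : ∀ u v (p : G.Walk u v), p.IsPath → p.length ≤ ℓ + 1) :
    Fintype.card V ≤ G.pc ℓ + 1 := by
  classical
  obtain ⟨c, hc⟩ := exists_isPCColoring_pc hG.connected ℓ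
  have hinj : Set.InjOn c G.edgeFinset := by
    simpa using injOn_edgeSet_of_isPCColoring hc hG.isAcyclic hℓ
  have := Finset.card_le_card_of_injOn c (t := Finset.range (G.pc ℓ))
    (fun e he ↦ Finset.mem_coe.2 (Finset.mem_range.2 (hc.1 e (by simpa using he)))) hinj
  rw [Finset.card_range] at this
  rw [← hG.card_edgeFinset]
  lia

theorem pc_eq_card_sub_one_iff_isTree [Fintype V] (hG : G.Connected) :
    G.pc ℓ = Fintype.card V - 1 ↔
      G.IsTree ∧ ∀ u v (p : G.Walk u v), p.IsPath → p.length ≤ ℓ + 1 := by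
  have hlt := pc_lt_card hG ℓ
  refine ⟨fun h ↦ ⟨⟨hG, ?_⟩, fun u v p hp ↦ ?_⟩, fun ⟨hT, hℓ⟩ ↦ ?_⟩
  · by_contra hcyc
    have := pc_add_two_le_of_not_isAcyclic hG hcyc ℓ
    lia
  · have := pc_add_length_le_of_isPath hG hp ℓ
    lia
  · have := card_le_pc_add_one hT hℓ
    lia

end Trees

/-- `IsDoubleStarCore G b c`: the vertices `b` and `c` are adjacent, every edge of `G` meets
`{b, c}`, and `b` and `c` have no common neighbor. Up to isolated vertices, such a `G` is a double
star with centers `b` and `c`, where a center need not have any leaves (so stars are included). -/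
structure IsDoubleStarCore {V : Type*} (G : SimpleGraph V) (b c : V) : Prop where
  adj : G.Adj b c
  mem_or_mem : ∀ ⦃e⦄, e ∈ G.edgeSet → b ∈ e ∨ c ∈ e
  not_adj_right : ∀ ⦃v⦄, G.Adj b v → ¬ G.Adj c v

namespace IsDoubleStarCore

variable {V W : Type*} {G : SimpleGraph V} {H : SimpleGraph W} {b c : V}

theorem eq_or_eq_or_eq_or_eq (h : IsDoubleStarCore G b c) {x y : V} (hxy : G.Adj x y) :
    b = x ∨ b = y ∨ c = x ∨ c = y := by
  simpa [or_assoc] using h.mem_or_mem (G.mem_edgeSet.2 hxy)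

theorem symm (h : IsDoubleStarCore G b c) : IsDoubleStarCore G c b :=
  ⟨h.adj.symm, fun _ he ↦ (h.mem_or_mem he).symm, fun _ hc hb ↦ h.not_adj_right hb hc⟩

theorem map (h : IsDoubleStarCore G b c) (e : G ≃g H) : IsDoubleStarCore H (e b) (e c) where
  adj := e.map_adj_iff.2 h.adj
  mem_or_mem f := by
    induction f with | h x y =>
    intro hxy
    have := h.eq_or_eq_or_eq_or_eq (e.symm.map_adj_iff.2 hxy)
    simpa [or_assoc, ← e.symm_apply_eq, eq_comm] using this
  not_adj_right v hb hc := by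
    obtain ⟨v, rfl⟩ := e.surjective v
    exact h.not_adj_right (e.map_adj_iff.1 hb) (e.map_adj_iff.1 hc)

theorem length_le_three (h : IsDoubleStarCore G b c) {u v : V} {p : G.Walk u v} (hp : p.IsPath) :
    p.length ≤ 3 := by
  match p, hp with
  | .nil, _ => simp
  | .cons _ .nil, _ => simp
  | .cons _ (.cons _ .nil), _ => simp
  | .cons _ (.cons _ (.cons _ .nil)), _ => simp
  | .cons (v := x₁) h₁ (.cons (v := x₂) h₂ (.cons (v := x₃) h₃ (.cons (v := x₄) h₄ q))), hp =>
    simp only [Walk.cons_isPath_iff, Walk.support_cons, List.mem_cons] at hp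
    have hx₄ := q.start_mem_support
    have hcover : (b = x₁ ∧ c = x₃) ∨ (b = x₃ ∧ c = x₁) := by
      have := h.eq_or_eq_or_eq_or_eq h₁
      have := h.eq_or_eq_or_eq_or_eq h₂
      have := h.eq_or_eq_or_eq_or_eq h₃
      have := h.eq_or_eq_or_eq_or_eq h₄
      grind
    rcases hcover with ⟨rfl, rfl⟩ | ⟨rfl, rfl⟩
    · exact absurd h₃.symm (h.not_adj_right h₂)
    · exact absurd h₂ (h.not_adj_right h₃.symm)

theorem eq_of_adj_of_adj (h : IsDoubleStarCore G b c) {v x y : V} (hb : v ≠ b) (hc : v ≠ c)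
    (hx : G.Adj v x) (hy : G.Adj v y) : x = y := by
  have := h.eq_or_eq_or_eq_or_eq hx
  have := h.eq_or_eq_or_eq_or_eq hy
  grind [h.not_adj_right (v := v), SimpleGraph.Adj.symm]

theorem isAcyclic (h : IsDoubleStarCore G b c) : G.IsAcyclic := by
  classical
  intro u p hp
  obtain ⟨v, hv, hvbc⟩ : ∃ v ∈ p.support.toFinset, v ∉ ({b, c} : Finset V) := by
    refine Finset.exists_mem_notMem_of_card_lt_card (Finset.card_le_two.trans_lt ?_)
    rw [card_toFinset_support_of_isCycle hp]
    exact hp.three_le_length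
  simp only [Finset.mem_insert, Finset.mem_singleton, not_or] at hvbc
  have hq := hp.rotate (List.mem_toFinset.1 hv)
  exact hq.snd_ne_penultimate (h.eq_of_adj_of_adj hvbc.1 hvbc.2
    (Walk.adj_snd hq.not_nil) (Walk.adj_penultimate hq.not_nil).symm)

theorem adj_or_adj (h : IsDoubleStarCore G b c) (hG : G.Preconnected) {v : V} (hb : v ≠ b)
    (hc : v ≠ c) : G.Adj b v ∨ G.Adj c v := by
  have : Nontrivial V := ⟨b, c, h.adj.ne⟩
  obtain ⟨w, hw⟩ := hG.exists_adj_of_nontrivial v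
  rcases h.eq_or_eq_or_eq_or_eq hw with rfl | rfl | rfl | rfl
  · exact absurd rfl hb
  · exact .inl hw.symm
  · exact absurd rfl hc
  · exact .inr hw.symm

end IsDoubleStarCore

theorem starGraph_adj_iff {n : ℕ} {i j : Fin n} :
    (_root_.starGraph n).Adj i j ↔ i ≠ j ∧ (i.val = 0 ∨ j.val = 0) :=
  fromRel_adj _ _ _

theorem isDoubleStarCore_starGraph {n : ℕ} (hn : 2 ≤ n) :
    IsDoubleStarCore (_root_.starGraph n) ⟨0, by lia⟩ ⟨1, by lia⟩ where
  adj := by simp [starGraph_adj_iff]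
  mem_or_mem e := by
    induction e with | h x y =>
    simp only [mem_edgeSet, starGraph_adj_iff, Sym2.mem_iff, Fin.ext_iff]
    lia
  not_adj_right v := by
    simp only [starGraph_adj_iff, ne_eq, Fin.ext_iff]
    lia

theorem isDoubleStarCore_doubleStar (m n : ℕ) :
    IsDoubleStarCore (doubleStar m n) (.inl 0) (.inl 1) where
  adj := by simp [doubleStar]
  mem_or_mem e := by
    induction e with | h x y =>
    simp only [mem_edgeSet, doubleStar, fromRel_adj, Sym2.mem_iff]
    tauto
  not_adj_right v := by
    rcases v with v | v | v
    · fin_cases v <;> simp [doubleStar]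
    · simp [doubleStar]
    · simp [doubleStar]

theorem nonempty_iso_starGraph_of_forall_adj_iff {V : Type*} [Fintype V] {G : SimpleGraph V} {b : V}
    (h : ∀ x y, G.Adj x y ↔ x ≠ y ∧ (x = b ∨ y = b)) :
    Nonempty (G ≃g _root_.starGraph (Fintype.card V)) := by
  classical
  have hpos : 0 < Fintype.card V := Fintype.card_pos_iff.2 ⟨b⟩
  let e := (Fintype.equivFin V).trans (Equiv.swap (Fintype.equivFin V b) ⟨0, hpos⟩)
  have heb : e b = ⟨0, hpos⟩ := Equiv.swap_apply_left _ _
  have he : ∀ x, (e x).val = 0 ↔ x = b := fun x ↦ by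
    rw [← e.apply_eq_iff_eq, heb, Fin.ext_iff]
  exact ⟨⟨e, fun {x y} ↦ by rw [starGraph_adj_iff, h, he, he, e.injective.ne_iff]⟩⟩

theorem IsDoubleStarCore.nonempty_iso_doubleStar_of_equiv {V : Type*} {G : SimpleGraph V}
    {m n : ℕ} (e : Fin 2 ⊕ (Fin m ⊕ Fin n) ≃ V)
    (h : IsDoubleStarCore G (e (.inl 0)) (e (.inl 1)))
    (hm : ∀ i, G.Adj (e (.inl 0)) (e (.inr (.inl i))))
    (hn : ∀ j, G.Adj (e (.inl 1)) (e (.inr (.inr j)))) : Nonempty (G ≃g doubleStar m n) := by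
  have hleaf : ∀ x y, ¬ G.Adj (e (.inr x)) (e (.inr y)) := fun x y hxy ↦ by
    simpa using h.eq_or_eq_or_eq_or_eq hxy
  have hm' : ∀ i, ¬ G.Adj (e (.inl 1)) (e (.inr (.inl i))) := fun i ↦ h.not_adj_right (hm i)
  have hn' : ∀ j, ¬ G.Adj (e (.inl 0)) (e (.inr (.inr j))) := fun j hj ↦ h.not_adj_right hj (hn j)
  have hadj : ∀ x y, G.Adj (e x) (e y) ↔ (doubleStar m n).Adj x y := by
    simp [Sum.forall, Fin.forall_fin_two, doubleStar, hm, hm', hn, hn', hleaf, h.adj, h.adj.symm,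
      G.adj_comm (e (.inr _))]
  exact ⟨(⟨e, hadj _ _⟩ : doubleStar m n ≃g G).symm⟩

theorem IsDoubleStarCore.nonempty_iso_starGraph {V : Type*} [Fintype V] {G : SimpleGraph V}
    {b c : V} (h : IsDoubleStarCore G b c) (hG : G.Preconnected) (hc : ∀ x, G.Adj c x → x = b) :
    Nonempty (G ≃g _root_.starGraph (Fintype.card V)) := by
  have hb : ∀ x, x ≠ b → G.Adj b x := by
    intro x hxb
    rcases eq_or_ne x c with rfl | hxc
    · exact h.adj
    · exact (h.adj_or_adj hG hxb hxc).resolve_right fun hcx ↦ hxb (hc x hcx)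
  refine nonempty_iso_starGraph_of_forall_adj_iff (b := b) fun x y ↦ ⟨fun hxy ↦ ⟨hxy.ne, ?_⟩, ?_⟩
  · rcases h.eq_or_eq_or_eq_or_eq hxy with rfl | rfl | rfl | rfl
    · exact .inl rfl
    · exact .inr rfl
    · exact .inr (hc _ hxy)
    · exact .inl (hc _ hxy.symm)
  · rintro ⟨hxy, rfl | rfl⟩
    · exact hb y hxy.symm
    · exact (hb x hxy).symm

theorem IsDoubleStarCore.nonempty_iso_doubleStar {V : Type*} [Finite V] {G : SimpleGraph V}
    {b c : V} (h : IsDoubleStarCore G b c) (hG : G.Preconnected) :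
    Nonempty (G ≃g doubleStar (Nat.card {x // G.Adj b x ∧ x ≠ c})
      (Nat.card {y // G.Adj c y ∧ y ≠ b})) := by
  let eb := (Finite.equivFin {x // G.Adj b x ∧ x ≠ c}).symm
  let ec := (Finite.equivFin {y // G.Adj c y ∧ y ≠ b}).symm
  let f : Fin 2 ⊕ (Fin _ ⊕ Fin _) → V :=
    Sum.elim ![b, c] (Sum.elim (fun i ↦ (eb i).1) (fun j ↦ (ec j).1))
  have hinj : f.Injective := by
    refine .sumElim ?_ (.sumElim (Subtype.val_injective.comp eb.injective)
      (Subtype.val_injective.comp ec.injective) fun i j hij ↦ ?_) ?_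
    · simp [Function.Injective, Fin.forall_fin_two, h.adj.ne, h.adj.ne']
    · exact h.not_adj_right (eb i).2.1 (hij ▸ (ec j).2.1)
    · simp only [Sum.forall, Fin.forall_fin_two]
      exact ⟨⟨fun i ↦ (eb i).2.1.ne, fun j ↦ (ec j).2.2.symm⟩,
        fun i ↦ (eb i).2.2.symm, fun j ↦ (ec j).2.1.ne⟩
  have hsurj : f.Surjective := by
    intro v
    by_cases hb : v = b
    · exact ⟨.inl 0, hb.symm⟩
    by_cases hc : v = c
    · exact ⟨.inl 1, hc.symm⟩
    rcases h.adj_or_adj hG hb hc with hbv | hcv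
    · exact ⟨.inr (.inl (eb.symm ⟨v, hbv, hc⟩)), by simp [f]⟩
    · exact ⟨.inr (.inr (ec.symm ⟨v, hcv, hb⟩)), by simp [f]⟩
  exact nonempty_iso_doubleStar_of_equiv (.ofBijective f ⟨hinj, hsurj⟩) h
    (fun i ↦ (eb i).2.1) (fun j ↦ (ec j).2.1)

section Existence

variable {V : Type*} {G : SimpleGraph V}

theorem exists_adj_adj_of_notMem (hG : G.Preconnected) {b c : V} {e : Sym2 V} (he : e ∈ G.edgeSet)
    (hb : b ∉ e) (hc : c ∉ e) :
    ∃ u v, G.Adj u v ∧ b ∉ s(u, v) ∧ c ∉ s(u, v) ∧ (G.Adj b u ∨ G.Adj c u) := by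
  induction e with | h x y =>
  let A := {u | ∃ v, G.Adj u v ∧ b ∉ s(u, v) ∧ c ∉ s(u, v)}
  obtain ⟨u, ⟨v, huv, hbuv, hcuv⟩, w, hw, huw⟩ :=
    exists_adj_mem_notMem hG (A := A) ⟨x, y, he, hb, hc⟩ ⟨b, by simp [A]⟩
  refine ⟨u, v, huv, hbuv, hcuv, ?_⟩
  have hwbc : b = w ∨ c = w := by
    by_contra! h
    exact hw ⟨u, huw.symm, by grind, by grind⟩
  rcases hwbc with rfl | rfl
  · exact .inl huw.symm
  · exact .inr huw.symm

theorem eq_of_adj_of_forall_length_le_three (hG : G.IsAcyclic)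
    (h3 : ∀ u v (p : G.Walk u v), p.IsPath → p.length ≤ 3) {x c b u v : V} (hcx : G.Adj c x)
    (hcb : G.Adj c b) (hbu : G.Adj b u) (huv : G.Adj u v) (huc : u ≠ c) (hvb : v ≠ b) :
    x = b := by
  by_contra hxb
  have := h3 _ _ (.cons hcx.symm (.cons hcb (.cons hbu huv.toWalk)))
    ((hG.isPath_iff_isChain _).2 (by simp [hxb, huc.symm, hvb.symm, hcx.ne', hcb.ne, hbu.ne]))
  simp at this

theorem degree_lt_degree_of_forall_length_le_three [G.LocallyFinite]
    (hG : G.IsAcyclic) (h3 : ∀ u v (p : G.Walk u v), p.IsPath → p.length ≤ 3) {c b u v : V}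
    (hcb : G.Adj c b) (hbu : G.Adj b u) (huv : G.Adj u v) (huc : u ≠ c) (hvb : v ≠ b) :
    G.degree c < G.degree u := by
  classical
  have hc : G.neighborFinset c ⊆ {b} := fun x hx ↦ Finset.mem_singleton.2 <|
    eq_of_adj_of_forall_length_le_three hG h3 (by simpa using hx) hcb hbu huv huc hvb
  have hu : {b, v} ⊆ G.neighborFinset u := by simp [Finset.insert_subset_iff, hbu.symm, huv]
  calc G.degree c ≤ ({b} : Finset V).card := Finset.card_le_card hc
    _ < ({b, v} : Finset V).card := by simp [Finset.card_pair hvb.symm]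
    _ ≤ G.degree u := Finset.card_le_card hu

theorem exists_isDoubleStarCore [Finite V] [Nontrivial V] (hG : G.IsTree)
    (h3 : ∀ u v (p : G.Walk u v), p.IsPath → p.length ≤ 3) : ∃ b c, IsDoubleStarCore G b c := by
  classical
  cases nonempty_fintype V
  obtain ⟨x⟩ := hG.connected.nonempty
  obtain ⟨y, hxy⟩ := hG.connected.preconnected.exists_adj_of_nontrivial x
  have : Nonempty G.Dart := ⟨⟨(x, y), hxy⟩⟩
  obtain ⟨⟨⟨b, c⟩, hbc⟩, hmax⟩ := Finite.exists_max fun d : G.Dart ↦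
    G.degree d.fst + G.degree d.snd
  refine ⟨b, c, hbc, fun e he ↦ ?_, fun v hb hc ↦ ?_⟩
  · by_contra! h
    obtain ⟨u, v, huv, hb, hc, hbu | hcu⟩ :=
      exists_adj_adj_of_notMem hG.connected.preconnected he h.1 h.2
    · have := degree_lt_degree_of_forall_length_le_three hG.isAcyclic h3 hbc.symm hbu huv
        (by grind) (by grind)
      have := hmax ⟨(b, u), hbu⟩
      lia
    · have := degree_lt_degree_of_forall_length_le_three hG.isAcyclic h3 hbc hcu huv
        (by grind) (by grind)
      have := hmax ⟨(c, u), hcu⟩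
      lia
  · exact hG.isAcyclic.cliqueFree le_rfl _ (is3Clique_triple_iff.2 ⟨hbc, hb, hc⟩)

end Existence

/-- For a nontrivial connected graph `G` on `n ≥ 2` vertices, `pc_{1,2}(G) = n - 1`
if and only if `G` is a star `S_n` or a double star `T(n₁,n₂)` with `n₁, n₂ ≥ 1`. -/
theorem pc_eq_card_sub_one_iff {V : Type*} [Fintype V] (G : SimpleGraph V)
    (hG : G.Connected) (hn : 2 ≤ Fintype.card V) :
    G.pc 2 = Fintype.card V - 1 ↔
      (Nonempty (G ≃g _root_.starGraph (Fintype.card V)) ∨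
        ∃ n₁ n₂ : ℕ, 1 ≤ n₁ ∧ 1 ≤ n₂ ∧ Nonempty (G ≃g doubleStar n₁ n₂)) := by
  rw [pc_eq_card_sub_one_iff_isTree hG]
  constructor
  · rintro ⟨hT, h3⟩
    have : Nontrivial V := Fintype.one_lt_card_iff_nontrivial.1 hn
    obtain ⟨b, c, h⟩ := exists_isDoubleStarCore hT h3
    by_cases hb : ∀ x, G.Adj b x → x = c
    · exact .inl (h.symm.nonempty_iso_starGraph hG.preconnected hb)
    by_cases hc : ∀ y, G.Adj c y → y = b
    · exact .inl (h.nonempty_iso_starGraph hG.preconnected hc)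
    push Not at hb hc
    have : Nonempty {x // G.Adj b x ∧ x ≠ c} := nonempty_subtype.2 hb
    have : Nonempty {y // G.Adj c y ∧ y ≠ b} := nonempty_subtype.2 hc
    exact .inr ⟨_, _, Nat.card_pos, Nat.card_pos, h.nonempty_iso_doubleStar hG.preconnected⟩
  · intro h
    obtain ⟨b, c, h⟩ : ∃ b c, IsDoubleStarCore G b c := by
      rcases h with ⟨⟨f⟩⟩ | ⟨n₁, n₂, -, -, ⟨f⟩⟩
      · exact ⟨_, _, (isDoubleStarCore_starGraph hn).map f.symm⟩
      · exact ⟨_, _, (isDoubleStarCore_doubleStar n₁ n₂).map f.symm⟩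
    exact ⟨⟨hG, h.isAcyclic⟩, fun u v p hp ↦ h.length_le_three hp⟩
end

section
/- The cycles on 3, 4 and 5 vertices satisfy pc_{1,2}(C₃) = 1, pc_{1,2}(C₄) = 2 and pc_{1,2}(C₅) = 3; that is, each cycle C_n with 3 ≤ n ≤ 5 has (1,2)-proper connection number n − 2. -/
open SimpleGraph

/-!
Among `k ≤ ℓ` colors a distance `ℓ`-proper path has at most `k` edges: its first `ℓ + 1` edges have
pairwise distinct colors. Hence the connection number is at least `min (ℓ + 1) (diam G)`, which is
sharp for `C₃` and `C₄`. On `C₅` two colors would leave only paths of length at most two; each path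
of length two is the unique one between its ends, so consecutive edges would differ in color, and a
proper 2-coloring of the edges of an odd cycle does not exist.
-/

section Rainbow

variable {V : Type*} {G : SimpleGraph V} {u v : V} {ℓ k : ℕ} {c : Sym2 V → ℕ}

/-- A walk is *rainbow* with respect to an edge-coloring `c` if its edges, counted with
multiplicity, have pairwise distinct colors. A rainbow walk is distance `ℓ`-proper for every `ℓ`. -/
def IsRainbow (c : Sym2 V → ℕ) (p : G.Walk u v) : Prop :=
  (p.edges.map c).Nodup

theorem IsRainbow.isDistProper {p : G.Walk u v} (hp : IsRainbow c p) (ℓ : ℕ) :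
    p.IsDistProper ℓ c := by
  intro i j hi hj hij _
  have := List.pairwise_iff_getElem.mp hp i j (by simpa using hi) (by simpa using hj) hij
  simpa only [List.getElem_map] using this

theorem nodup_take_map_edges_of_isDistProper {p : G.Walk u v} (hp : p.IsDistProper ℓ c) :
    ((p.edges.map c).take (ℓ + 1)).Nodup := by
  refine List.pairwise_iff_getElem.mpr fun i j hi hj hij => ?_
  simp only [List.length_take, List.length_map, lt_min_iff] at hi hj
  simpa only [List.getElem_take, List.getElem_map] using hp i j hi.2 hj.2 hij (by lia)

theorem isRainbow_of_isDistProper {p : G.Walk u v} (hp : p.IsDistProper ℓ c)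
    (hlen : p.length ≤ ℓ + 1) : IsRainbow c p := by
  have hnodup := nodup_take_map_edges_of_isDistProper hp
  rwa [List.take_of_length_le (by simpa using hlen)] at hnodup

theorem min_length_le_of_isDistProper {p : G.Walk u v} (hc : ∀ e ∈ G.edgeSet, c e < k)
    (hp : p.IsDistProper ℓ c) : min (ℓ + 1) p.length ≤ k := by
  have hsub : (p.edges.map c).take (ℓ + 1) ⊆ List.range k := by
    intro a ha
    obtain ⟨e, he, rfl⟩ := List.mem_map.mp (List.mem_of_mem_take ha)
    exact List.mem_range.mpr (hc e (p.edges_subset_edgeSet he))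
  simpa using ((nodup_take_map_edges_of_isDistProper hp).subperm hsub).length_le

end Rainbow

section PCColoring

variable {V : Type*} {G : SimpleGraph V} {u v : V} {ℓ k : ℕ} {c : Sym2 V → ℕ}

theorem min_dist_le_of_isPCColoring (h : G.IsPCColoring ℓ k c) (u v : V) :
    min (ℓ + 1) (G.dist u v) ≤ k := by
  obtain rfl | huv := eq_or_ne u v
  · simp
  obtain ⟨p, -, hp⟩ := h.2 u v huv
  exact (min_le_min_left _ (dist_le p)).trans (min_length_le_of_isDistProper h.1 hp)

theorem exists_isRainbow_length_le_of_isPCColoring (h : G.IsPCColoring ℓ k c) (hk : k ≤ ℓ)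
    (huv : u ≠ v) : ∃ p : G.Walk u v, IsRainbow c p ∧ p.length ≤ k := by
  obtain ⟨p, -, hp⟩ := h.2 u v huv
  have hlen : p.length ≤ k := by
    have := min_length_le_of_isDistProper h.1 hp
    lia
  exact ⟨p, isRainbow_of_isDistProper hp (by lia), hlen⟩

theorem exists_adj_adj_color_ne_of_isPCColoring (h : G.IsPCColoring ℓ k c) (hk : k ≤ ℓ)
    (hk₂ : k ≤ 2) (huv : u ≠ v) (hadj : ¬ G.Adj u v) :
    ∃ w, G.Adj u w ∧ G.Adj w v ∧ c s(u, w) ≠ c s(w, v) := by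
  obtain ⟨p, hp, hlen⟩ := exists_isRainbow_length_le_of_isPCColoring h hk huv
  match p with
  | .nil => exact absurd rfl huv
  | .cons huv' .nil => exact absurd huv' hadj
  | .cons huw (.cons hwv .nil) => exact ⟨_, huw, hwv, by simpa [IsRainbow] using hp⟩
  | .cons _ (.cons _ (.cons _ _)) =>
    simp only [Walk.length_cons] at hlen
    lia

theorem isPCColoring_of_adj_or_color_ne (hc : ∀ u v, G.Adj u v → c s(u, v) < k)
    (hconn : ∀ u v, u ≠ v →
      G.Adj u v ∨ ∃ w, G.Adj u w ∧ G.Adj w v ∧ c s(u, w) ≠ c s(w, v)) :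
    G.IsPCColoring ℓ k c := by
  refine ⟨fun e => Sym2.ind hc e, fun u v huv => ?_⟩
  obtain huv' | ⟨w, huw, hwv, hne⟩ := hconn u v huv
  · exact ⟨huv'.toWalk, huv'.isPath_toWalk, IsRainbow.isDistProper (by simp [IsRainbow]) ℓ⟩
  · refine ⟨.cons huw hwv.toWalk, by simp [huw.ne, huv, hwv.ne], ?_⟩
    exact IsRainbow.isDistProper (by simpa [IsRainbow] using hne) ℓ

theorem pc_top [Nontrivial V] (ℓ : ℕ) : (⊤ : SimpleGraph V).pc ℓ = 1 := by
  refine IsLeast.csInf_eq ⟨⟨fun _ => 0, ?_⟩, ?_⟩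
  · exact isPCColoring_of_adj_or_color_ne (fun _ _ _ => one_pos) fun _ _ huv => .inl huv
  · rintro k ⟨c, hc⟩
    obtain ⟨u, v, huv⟩ := exists_pair_ne V
    simpa [dist_top_of_ne huv] using min_dist_le_of_isPCColoring hc u v

end PCColoring

section CycleGraph

variable {n ℓ k : ℕ}

open Fin.CommRing in
theorem not_cycleGraph_adj_add_one_add_one (i : Fin (n + 4)) :
    ¬ (cycleGraph (n + 4)).Adj i (i + 1 + 1) := by
  have three_ne : (3 : Fin (n + 4)) ≠ 0 := by simp [Fin.ext_iff, Nat.mod_eq_of_lt]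
  rw [cycleGraph_adj]
  rintro (h | h)
  · exact absurd (by linear_combination -h) three_ne
  · exact absurd (by linear_combination h) (one_ne_zero : (1 : Fin (n + 4)) ≠ 0)

open Fin.CommRing in
theorem eq_add_one_of_cycleGraph_adj_of_adj {i w : Fin (n + 5)}
    (hiw : (cycleGraph (n + 5)).Adj i w) (hwi : (cycleGraph (n + 5)).Adj w (i + 1 + 1)) :
    w = i + 1 := by
  have two_ne : (2 : Fin (n + 5)) ≠ 0 := by simp [Fin.ext_iff, Nat.mod_eq_of_lt]
  have four_ne : (4 : Fin (n + 5)) ≠ 0 := by simp [Fin.ext_iff, Nat.mod_eq_of_lt]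
  obtain hiw | hiw := cycleGraph_adj.mp hiw
  · obtain hwi | hwi := cycleGraph_adj.mp hwi
    · exact absurd (by linear_combination -hiw - hwi) four_ne
    · exact absurd (by linear_combination hwi - hiw) two_ne
  · exact eq_add_of_sub_eq' hiw

theorem color_ne_color_succ_of_isPCColoring_cycleGraph {c : Sym2 (Fin (n + 5)) → ℕ}
    (h : (cycleGraph (n + 5)).IsPCColoring ℓ k c) (hk : k ≤ ℓ) (hk₂ : k ≤ 2) (i : Fin (n + 5)) :
    c s(i, i + 1) ≠ c s(i + 1, i + 1 + 1) := by
  have hne : i ≠ i + 1 + 1 := by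
    simp [add_assoc, Fin.ext_iff, Fin.val_add, Nat.mod_eq_of_lt]
  obtain ⟨w, hiw, hwi, hcolor⟩ := exists_adj_adj_color_ne_of_isPCColoring h hk hk₂ hne
    (not_cycleGraph_adj_add_one_add_one i)
  rwa [eq_add_one_of_cycleGraph_adj_of_adj hiw hwi] at hcolor

theorem three_le_of_isPCColoring_cycleGraph_of_odd (hn : 5 ≤ n) (hodd : Odd n) (hℓ : 2 ≤ ℓ)
    {c : Sym2 (Fin n) → ℕ} (h : (cycleGraph n).IsPCColoring ℓ k c) : 3 ≤ k := by
  by_contra! hk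
  obtain ⟨n, rfl⟩ := Nat.exists_eq_add_of_le' hn
  have hlt (i : Fin (n + 5)) : c s(i, i + 1) < 2 :=
    (h.1 _ (by simp [cycleGraph_adj])).trans_le (by lia)
  have hsucc (i : Fin (n + 5)) : c s(i, i + 1) ≠ c s(i + 1, i + 1 + 1) :=
    color_ne_color_succ_of_isPCColoring_cycleGraph h (by lia) (by lia) i
  have hcolor : (cycleGraph (n + 5)).Colorable 2 := by
    refine ⟨Coloring.mk (fun i => ⟨c s(i, i + 1), hlt i⟩) fun {i j} hij => ?_⟩
    rw [Ne, Fin.mk.injEq]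
    obtain hij | hij := cycleGraph_adj.mp hij
    · obtain rfl := eq_add_of_sub_eq' hij
      exact (hsucc j).symm
    · obtain rfl := eq_add_of_sub_eq' hij
      exact hsucc i
  have hchi := hcolor.chromaticNumber_le
  rw [chromaticNumber_cycleGraph_of_odd _ (by lia) hodd] at hchi
  exact absurd hchi (by decide)

theorem pc_cycleGraph_four (hℓ : 1 ≤ ℓ) : (cycleGraph 4).pc ℓ = 2 := by
  refine IsLeast.csInf_eq ⟨⟨fun e => if e = s(0, 1) ∨ e = s(2, 3) then 0 else 1,
    isPCColoring_of_adj_or_color_ne (by decide) (by decide)⟩, ?_⟩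
  rintro k ⟨c, hc⟩
  have hdist : 1 < (cycleGraph 4).dist 0 2 :=
    cycleGraph_connected.one_lt_dist_of_ne_of_not_adj (by decide) (by decide)
  have := min_dist_le_of_isPCColoring hc 0 2
  lia

theorem pc_cycleGraph_five (hℓ : 2 ≤ ℓ) : (cycleGraph 5).pc ℓ = 3 := by
  refine IsLeast.csInf_eq ⟨⟨fun e => if e = s(0, 1) ∨ e = s(2, 3) then 0 else
    if e = s(1, 2) ∨ e = s(3, 4) then 1 else 2,
    isPCColoring_of_adj_or_color_ne (by decide) (by decide)⟩, ?_⟩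
  rintro k ⟨c, hc⟩
  exact three_le_of_isPCColoring_cycleGraph_of_odd le_rfl (by decide) hℓ hc

end CycleGraph

theorem pc_small_cycles_general {ℓ : ℕ} (hℓ : 2 ≤ ℓ) :
    (cycleGraph 3).pc ℓ = 1 ∧ (cycleGraph 4).pc ℓ = 2 ∧ (cycleGraph 5).pc ℓ = 3 :=
  ⟨cycleGraph_three_eq_top ▸ pc_top ℓ, pc_cycleGraph_four (by lia), pc_cycleGraph_five hℓ⟩

/-- `pc_{1,2}(C₃) = 1`, `pc_{1,2}(C₄) = 2` and `pc_{1,2}(C₅) = 3`; that is,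
each cycle `C_n` with `3 ≤ n ≤ 5` has `(1,2)`-proper connection number `n - 2`. -/
theorem pc_small_cycles :
    (SimpleGraph.cycleGraph 3).pc 2 = 1 ∧
      (SimpleGraph.cycleGraph 4).pc 2 = 2 ∧
      (SimpleGraph.cycleGraph 5).pc 2 = 3 :=
  pc_small_cycles_general le_rfl
end
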